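/- arXiv:math/9905209 — 2 statements merged into one kernel-verified Lean document; each statement's English description precedes it below -/
import Mathlib

section
/- Every nontrivial finitely generated subgroup H of M(Ψ) admits a preferred presentation: there exist natural numbers m, r and elements w_1, …, w_m of the free group on generators x_1, …, x_m, y_1, …, y_r such that the assignment x_j ↦ w_j extends to an injective homomorphism from the free group on x_1, …, x_m into the free group on x_1, …, x_m, y_1, …, y_r, and H is isomorphic to the group with presentation ⟨s, x_1, …, x_m, y_1, …, y_r | s x_j s⁻¹ w_j⁻¹ (1 ≤ j ≤ m)⟩. -/
/-- Given `J ⊆ I`, the free factor `F = ⟨e_j : j ∈ J⟩` of the free group `G` on `I`. -/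
def freeFactor {I : Type} (J : Set I) : Subgroup (FreeGroup I) :=
  Subgroup.closure (FreeGroup.of '' J)

/-- The relators `t e_j t⁻¹ Ψ(e_j)⁻¹ (j ∈ J)` of the mapping torus `M(Ψ)` of an injective
homomorphism `Ψ : F → G` from the free factor `F = ⟨e_j : j ∈ J⟩` of the free group `G` on `I`;
the generator `none` plays the role of the stable letter `t`. -/
def mtRelsRel {I : Type} (J : Set I) (Ψ : freeFactor J →* FreeGroup I) :
    Set (FreeGroup (Option I)) :=
  Set.range fun j : J =>
    FreeGroup.of (none : Option I) * FreeGroup.of (some (j : I)) *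
      (FreeGroup.of (none : Option I))⁻¹ *
      (FreeGroup.map some
        (Ψ ⟨FreeGroup.of (j : I),
          Subgroup.subset_closure (Set.mem_image_of_mem _ j.2)⟩))⁻¹

/-- The mapping torus `M(Ψ) = ⟨t, eᵢ (i ∈ I) | t e_j t⁻¹ Ψ(e_j)⁻¹ (j ∈ J)⟩`, i.e. the HNN
extension `G ∗_F` with bonding maps the inclusion of `F` into `G` and `Ψ`. -/
abbrev MTRel {I : Type} (J : Set I) (Ψ : freeFactor J →* FreeGroup I) : Type :=
  PresentedGroup (mtRelsRel J Ψ)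

/-- The relators `s x_j s⁻¹ w_j⁻¹ (1 ≤ j ≤ m)` of a preferred presentation
`⟨s, x₁, …, x_m, y₁, …, y_r | s x_j s⁻¹ w_j⁻¹⟩`: the generator `none` is the stable letter `s`,
`some (Sum.inl j)` is `x_j` and `some (Sum.inr k)` is `y_k`. -/
def prefRels (m r : ℕ) (w : Fin m → FreeGroup (Fin m ⊕ Fin r)) :
    Set (FreeGroup (Option (Fin m ⊕ Fin r))) :=
  Set.range fun j : Fin m =>
    FreeGroup.of (none : Option (Fin m ⊕ Fin r)) * FreeGroup.of (some (Sum.inl j)) *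
      (FreeGroup.of (none : Option (Fin m ⊕ Fin r)))⁻¹ *
      (FreeGroup.map some (w j))⁻¹

namespace PrefPres

open Function

/-! ### Counting homomorphisms, the Hopf property -/

theorem surj_card {α β : Type} [Finite α] (f : FreeGroup α →* FreeGroup β) (hf : Surjective f) :
    Finite β ∧ Nat.card β ≤ Nat.card α := by
  classical
  let Q := Multiplicative (ZMod 2)
  let r : (β → Q) → (α → Q) := fun u => FreeGroup.lift.symm ((FreeGroup.lift u).comp f)
  have hr : Injective r := by
    intro u v huv
    have h1 : (FreeGroup.lift u).comp f = (FreeGroup.lift v).comp f :=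
      FreeGroup.lift.symm.injective huv
    have h2 : FreeGroup.lift u = FreeGroup.lift v := by
      ext x
      obtain ⟨y, hy⟩ := hf (FreeGroup.of x)
      have := DFunLike.congr_fun h1 y
      simpa [hy] using this
    exact FreeGroup.lift.injective h2
  have hfin : Finite (β → Q) := Finite.of_injective r hr
  have hβ : Finite β := by
    let e : β → (β → Q) := fun b c => if b = c then Multiplicative.ofAdd (1 : ZMod 2) else 1
    refine Finite.of_injective e ?_
    intro b c hbc
    by_contra hne
    have := congrFun hbc c
    simp [e, hne] at this
    exact absurd (congrArg Multiplicative.toAdd this) (by decide)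
  refine ⟨hβ, ?_⟩
  have h := Nat.card_le_card_of_injective r hr
  have hQ : Nat.card Q = 2 := by simp [Q]
  rw [Nat.card_fun, Nat.card_fun, hQ] at h
  exact (Nat.pow_le_pow_iff_right (by norm_num)).1 h

/-- A partial injection on a finite type extends to a permutation. -/
theorem extend_perm {B : Type} [Finite B] (p : B → Prop) (f : B → B)
    (hf : ∀ x y, p x → p y → f x = f y → x = y) : ∃ e : Equiv.Perm B, ∀ x, p x → e x = f x := by
  classical
  let q : B → Prop := fun y => ∃ x, p x ∧ f x = y
  let e0 : {x // p x} ≃ {y // q y} := Equiv.ofBijective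
    (fun x => ⟨f x.1, x.1, x.2, rfl⟩) (by
      constructor
      · intro x y hxy
        exact Subtype.ext (hf _ _ x.2 y.2 (congrArg Subtype.val hxy))
      · rintro ⟨y, x, hx, rfl⟩
        exact ⟨⟨x, hx⟩, rfl⟩)
  refine ⟨e0.extendSubtype, fun x hx => ?_⟩
  rw [Equiv.extendSubtype_apply_of_mem _ _ hx]
  rfl

theorem residually_finite {α : Type} (w : FreeGroup α) (hw : w ≠ 1) :
    ∃ (B : Type) (_ : Finite B) (ρ : FreeGroup α →* Equiv.Perm B), ρ w ≠ 1 := by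
  classical
  obtain ⟨L, rfl⟩ : ∃ L, FreeGroup.mk L = w := ⟨w.toWord, FreeGroup.mk_toWord⟩
  let S : Set (FreeGroup α) := {g | ∃ L', L' <:+ L ∧ FreeGroup.mk L' = g}
  have hS : S.Finite := by
    have : S ⊆ (fun L' => FreeGroup.mk L') '' {L' | L' ∈ L.tails} := by
      rintro g ⟨L', h, rfl⟩
      exact ⟨L', by simpa using h, rfl⟩
    exact ((List.finite_toSet _).image _).subset this
  have : Finite S := hS
  have key : ∀ x : α, ∃ e : Equiv.Perm S, ∀ g : S, FreeGroup.of x * g.1 ∈ S →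
      (e g).1 = FreeGroup.of x * g.1 := by
    intro x
    obtain ⟨e, he⟩ := extend_perm (B := S) (fun g => FreeGroup.of x * g.1 ∈ S)
      (fun g => if h : FreeGroup.of x * g.1 ∈ S then ⟨_, h⟩ else g) (by
        intro g h hg hh hgh
        simp only [hg, hh, dif_pos] at hgh
        exact Subtype.ext (mul_left_cancel (congrArg Subtype.val hgh)))
    refine ⟨e, fun g hg => ?_⟩
    rw [he g hg]
    simp [hg]
  choose e he using key
  let ρ := FreeGroup.lift e
  have h1 : (1 : FreeGroup α) ∈ S := ⟨[], List.nil_suffix, rfl⟩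
  have main : ∀ L', L' <:+ L → (ρ (FreeGroup.mk L') ⟨1, h1⟩).1 = FreeGroup.mk L' := by
    intro L'
    induction L' with
    | nil => intro _; rw [← FreeGroup.one_eq_mk]; simp
    | cons a L' ih =>
      intro hL
      have hL' : L' <:+ L := (List.suffix_cons a L').trans hL
      have ih := ih hL'
      obtain ⟨x, b⟩ := a
      have hsplit : FreeGroup.mk ((x, b) :: L') = FreeGroup.mk [(x, b)] * FreeGroup.mk L' := by
        rw [FreeGroup.mul_mk]; rfl
      have hmem : FreeGroup.mk ((x, b) :: L') ∈ S := ⟨_, hL, rfl⟩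
      have hmem' : FreeGroup.mk L' ∈ S := ⟨_, hL', rfl⟩
      have ih' : ρ (FreeGroup.mk L') ⟨1, h1⟩ = ⟨FreeGroup.mk L', hmem'⟩ := Subtype.ext ih
      rw [hsplit, map_mul, Equiv.Perm.mul_apply, ih']
      rw [hsplit] at hmem
      cases b with
      | true =>
        have hx : FreeGroup.mk [(x, true)] = FreeGroup.of x := rfl
        rw [hx] at hmem ⊢
        have : ρ (FreeGroup.of x) = e x := FreeGroup.lift_apply_of
        rw [this]
        exact he x ⟨_, hmem'⟩ hmem
      | false =>
        have hx : FreeGroup.mk [(x, false)] = (FreeGroup.of x)⁻¹ := rfl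
        rw [hx] at hmem ⊢
        have : ρ (FreeGroup.of x) = e x := FreeGroup.lift_apply_of
        rw [map_inv, this]
        have h2 := he x ⟨_, hmem⟩ (by simpa using hmem')
        have h3 : e x ⟨_, hmem⟩ = ⟨FreeGroup.mk L', hmem'⟩ := Subtype.ext (by rw [h2]; simp)
        rw [← h3]; simp
  refine ⟨S, this, ρ, fun h => hw ?_⟩
  rw [← main L List.suffix_rfl, h]
  simp

theorem hopf {α : Type} [Finite α] (f : FreeGroup α →* FreeGroup α) (hf : Surjective f) :
    Injective f := by
  rw [injective_iff_map_eq_one]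
  intro w hw
  by_contra hne
  obtain ⟨B, hB, ρ, hρ⟩ := residually_finite w hne
  let r : (FreeGroup α →* Equiv.Perm B) → (FreeGroup α →* Equiv.Perm B) := fun u => u.comp f
  have hr : Injective r := by
    intro u v huv
    ext1 x
    obtain ⟨y, hy⟩ := hf (FreeGroup.of x)
    have := DFunLike.congr_fun huv y
    simpa [r, hy] using this
  have : Finite (FreeGroup α →* Equiv.Perm B) :=
    Finite.of_injective _ FreeGroup.lift.symm.injective
  obtain ⟨u, hu⟩ := (Finite.injective_iff_surjective.1 hr) ρ
  apply hρ
  rw [← hu]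
  simp [r, hw]

theorem surj_inj {α β : Type} [Finite α] [Finite β] (f : FreeGroup α →* FreeGroup β)
    (hf : Surjective f) (hc : Nat.card α = Nat.card β) : Injective f := by
  let e : α ≃ β := (Finite.equivFin α).trans ((finCongr hc).trans (Finite.equivFin β).symm)
  let E : FreeGroup β ≃* FreeGroup α := FreeGroup.freeGroupCongr e.symm
  have := hopf (E.toMonoidHom.comp f) (E.surjective.comp hf)
  exact Injective.of_comp (f := E) this

/-! ### Rank -/

/-- rank of a subgroup of a free group -/
noncomputable def rk {κ : Type} (W : Subgroup (FreeGroup κ)) : ℕ :=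
  Nat.card (IsFreeGroup.Generators W)

section
variable {κ : Type}

theorem fin_gen {W : Subgroup (FreeGroup κ)} {α : Type} [Finite α] (f : FreeGroup α →* FreeGroup κ)
    (hf : f.range = W) : Finite (IsFreeGroup.Generators W) ∧ rk W ≤ Nat.card α := by
  subst hf
  refine surj_card ((IsFreeGroup.mulEquiv f.range).symm.toMonoidHom.comp f.rangeRestrict) ?_
  exact (IsFreeGroup.mulEquiv f.range).symm.surjective.comp f.rangeRestrict_surjective

theorem exists_hom_of_fg {G : Type} [Group G] {W : Subgroup G} (hW : W.FG) :
    ∃ (n : ℕ) (f : FreeGroup (Fin n) →* G), f.range = W := by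
  obtain ⟨S, hS⟩ := hW
  refine ⟨S.card, FreeGroup.lift fun i => (S.equivFin.symm i : G), ?_⟩
  rw [FreeGroup.range_lift_eq_closure, ← hS]
  congr 1
  ext x
  constructor
  · rintro ⟨i, rfl⟩
    exact (S.equivFin.symm i).2
  · intro hx
    exact ⟨S.equivFin ⟨x, hx⟩, by simp⟩

theorem range_fg {G : Type} [Group G] {α : Type} [Finite α] (f : FreeGroup α →* G) :
    f.range.FG := by
  have : f = FreeGroup.lift (fun a => f (FreeGroup.of a)) := by ext; simp
  rw [this, FreeGroup.range_lift_eq_closure]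
  exact (Subgroup.fg_iff _).2 ⟨_, rfl, Set.finite_range _⟩

theorem exists_basis {W : Subgroup (FreeGroup κ)} (hW : W.FG) :
    ∃ f : FreeGroup (Fin (rk W)) →* FreeGroup κ, Injective f ∧ f.range = W := by
  obtain ⟨n, f, hf⟩ := exists_hom_of_fg hW
  have := (fin_gen f hf).1
  let e : IsFreeGroup.Generators W ≃ Fin (rk W) := Finite.equivFin _
  let E : FreeGroup (Fin (rk W)) ≃* W :=
    (FreeGroup.freeGroupCongr e.symm).trans (IsFreeGroup.mulEquiv W)
  refine ⟨W.subtype.comp E.toMonoidHom, ?_, ?_⟩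
  · exact W.subtype_injective.comp E.injective
  · rw [MonoidHom.range_comp]
    have : E.toMonoidHom.range = ⊤ := MonoidHom.range_eq_top.2 E.surjective
    rw [this, ← MonoidHom.range_eq_map, Subgroup.range_subtype]

theorem rk_range_le {α : Type} [Finite α] (f : FreeGroup α →* FreeGroup κ) :
    rk f.range ≤ Nat.card α := (fin_gen f rfl).2

theorem rk_range_of_inj {α : Type} [Finite α] (f : FreeGroup α →* FreeGroup κ) (hf : Injective f) :
    rk f.range = Nat.card α := by
  have e : FreeGroup α ≃* f.range := MonoidHom.ofInjective hf
  exact (Nat.card_congr (Equiv.ofFreeGroupEquiv (e.trans (IsFreeGroup.mulEquiv f.range).symm))).symm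

theorem inj_of_rk {α : Type} [Finite α] (f : FreeGroup α →* FreeGroup κ)
    (hf : rk f.range = Nat.card α) : Injective f := by
  have := (fin_gen f rfl).1
  have h := surj_inj ((IsFreeGroup.mulEquiv f.range).symm.toMonoidHom.comp f.rangeRestrict)
    ((IsFreeGroup.mulEquiv f.range).symm.surjective.comp f.rangeRestrict_surjective) hf.symm
  have h2 : Injective f.rangeRestrict := by
    intro x y hxy
    exact h (by simp [hxy])
  intro x y hxy
  exact h2 (Subtype.ext hxy)

theorem rk_map {κ' : Type} {W : Subgroup (FreeGroup κ)} (hW : W.FG)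
    (φ : FreeGroup κ →* FreeGroup κ') (hφ : Injective φ) : rk (W.map φ) = rk W := by
  obtain ⟨f, hf, hfr⟩ := exists_basis hW
  have : W.map φ = (φ.comp f).range := by rw [MonoidHom.range_comp, hfr]
  rw [this, rk_range_of_inj (φ.comp f) (hφ.comp hf)]
  simp

/-! ### generated subgroups -/

end

/-- subgroup generated by `X` and a list -/
def gen {G : Type} [Group G] (X : Subgroup G) (l : List G) : Subgroup G :=
  X ⊔ Subgroup.closure {x | x ∈ l}

section
variable {G : Type} [Group G]

theorem gen_le {X K : Subgroup G} {l : List G} : gen X l ≤ K ↔ X ≤ K ∧ ∀ x ∈ l, x ∈ K := by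
  unfold gen
  rw [sup_le_iff, Subgroup.closure_le]
  rfl

theorem le_gen (X : Subgroup G) (l : List G) : X ≤ gen X l := le_sup_left

theorem mem_gen (X : Subgroup G) {l : List G} {x : G} (hx : x ∈ l) : x ∈ gen X l :=
  (le_sup_right : _ ≤ gen X l) (Subgroup.subset_closure hx)

theorem gen_nil (X : Subgroup G) : gen X [] = X := by
  apply le_antisymm
  · rw [gen_le]; simp
  · exact le_gen _ _

theorem gen_append (X : Subgroup G) (l l' : List G) : gen X (l ++ l') = gen (gen X l) l' := by
  apply le_antisymm
  · rw [gen_le]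
    refine ⟨(le_gen _ _).trans (le_gen _ _), fun x hx => ?_⟩
    rcases List.mem_append.1 hx with h | h
    · exact le_gen _ _ (mem_gen _ h)
    · exact mem_gen _ h
  · rw [gen_le, gen_le]
    exact ⟨⟨le_gen _ _, fun x hx => mem_gen _ (by simp [hx])⟩, fun x hx => mem_gen _ (by simp [hx])⟩

theorem gen_cons (X : Subgroup G) (c : G) (l : List G) : gen X (c :: l) = gen (gen X [c]) l :=
  gen_append X [c] l

theorem gen_cons' (X : Subgroup G) (c : G) (l : List G) : gen X (c :: l) = gen (gen X l) [c] := by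
  rw [← gen_append]
  unfold gen
  congr 2
  ext x
  simp [or_comm]

theorem gen_perm (X : Subgroup G) {l l' : List G} (h : l.Perm l') : gen X l = gen X l' := by
  unfold gen
  congr 2
  ext x
  exact h.mem_iff

theorem gen_fg {X : Subgroup G} (hX : X.FG) (l : List G) : (gen X l).FG := by
  refine Subgroup.FG.sup hX ?_
  exact (Subgroup.fg_iff _).2 ⟨_, rfl, List.finite_toSet l⟩

theorem gen_mono {X Y : Subgroup G} (h : X ≤ Y) (l : List G) : gen X l ≤ gen Y l :=
  sup_le_sup_right h _

theorem gen_map {G' : Type} [Group G'] (φ : G →* G') (X : Subgroup G) (l : List G) :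
    (gen X l).map φ = gen (X.map φ) (l.map φ) := by
  unfold gen
  rw [Subgroup.map_sup, MonoidHom.map_closure]
  congr 2
  ext x
  simp

theorem range_lift_sum {α γ : Type} (a : α → G) (c : γ → G) :
    (FreeGroup.lift (Sum.elim a c)).range =
      (FreeGroup.lift a).range ⊔ (FreeGroup.lift c).range := by
  simp only [FreeGroup.range_lift_eq_closure, Set.Sum.elim_range, Subgroup.closure_union]

theorem gen_eq_range (X : Subgroup G) {α : Type} (a : α → G)
    (hX : (FreeGroup.lift a).range = X) (l : List G) :
    (FreeGroup.lift (Sum.elim a l.get)).range = gen X l := by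
  rw [range_lift_sum, hX, FreeGroup.range_lift_eq_closure]
  unfold gen
  congr 2
  simp

end

section
variable {κ : Type}

theorem exists_basis' {W : Subgroup (FreeGroup κ)} (hW : W.FG) :
    ∃ b : Fin (rk W) → FreeGroup κ, Injective (FreeGroup.lift b) ∧ (FreeGroup.lift b).range = W := by
  obtain ⟨f, hf, hfr⟩ := exists_basis hW
  have : f = FreeGroup.lift (fun a => f (FreeGroup.of a)) := by ext; simp
  refine ⟨fun a => f (FreeGroup.of a), ?_, ?_⟩
  · rwa [← this]
  · rwa [← this]

theorem rk_gen_le {X : Subgroup (FreeGroup κ)} (hX : X.FG) (l : List (FreeGroup κ)) :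
    rk (gen X l) ≤ rk X + l.length := by
  obtain ⟨b, hb, hbr⟩ := exists_basis' hX
  rw [← gen_eq_range X b hbr l]
  refine (rk_range_le _).trans ?_
  simp

end

/-! ### Ping-pong -/

theorem ping_pong {G : Type} [Group G] {α γ : Type} [Nonempty γ]
    (f : α → G) (g : γ → G) {Y : Type} [MulAction G Y] (P Q : Set Y)
    (hP : P.Nonempty) (hQ : Q.Nonempty) (hPQ : Disjoint P Q)
    (hf : ∀ x : FreeGroup α, x ≠ 1 → ∀ p ∈ P, FreeGroup.lift f x • p ∈ Q)
    (hg : ∀ x : FreeGroup γ, x ≠ 1 → ∀ q ∈ Q, FreeGroup.lift g x • q ∈ P) :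
    Injective (FreeGroup.lift (Sum.elim f g)) := by
  classical
  let K : Bool → Type := fun b => bif b then α else γ
  let u : (b : Bool) → K b → G := fun b => match b with
    | true => f
    | false => g
  let F : (b : Bool) → FreeGroup (K b) →* G := fun b => FreeGroup.lift (u b)
  have hinj := Monoid.CoprodI.lift_injective_of_ping_pong F (Or.inr ⟨false, ?_⟩) (α := Y)
    (fun b => match b with
      | true => Q
      | false => P) ?_ ?_ ?_
  · let i : FreeGroup (α ⊕ γ) →* Monoid.CoprodI fun b => FreeGroup (K b) :=
      FreeGroup.lift (Sum.elim
        (fun a => Monoid.CoprodI.of (i := true) (FreeGroup.of (α := K true) a))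
        (fun c => Monoid.CoprodI.of (i := false) (FreeGroup.of (α := K false) c)))
    let ux : (b : Bool) → K b → FreeGroup (α ⊕ γ) := fun b => match b with
      | true => fun a => FreeGroup.of (Sum.inl a)
      | false => fun a => FreeGroup.of (Sum.inr a)
    let j : Monoid.CoprodI (fun b => FreeGroup (K b)) →* FreeGroup (α ⊕ γ) :=
      Monoid.CoprodI.lift fun b => FreeGroup.lift (ux b)
    have hij : j.comp i = MonoidHom.id _ := by
      ext x
      rcases x with x | x <;> simp [i, j, ux]
    have hi : Injective i := by
      intro x y hxy
      have := congrArg j hxy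
      have h1 := DFunLike.congr_fun hij x
      have h2 := DFunLike.congr_fun hij y
      simp only [MonoidHom.comp_apply, MonoidHom.id_apply] at h1 h2
      rw [← h1, ← h2, this]
    have hc : FreeGroup.lift (Sum.elim f g) = (Monoid.CoprodI.lift F).comp i := by
      ext x
      rcases x with x | x <;> simp [i, F, u]
    rw [hc]
    exact hinj.comp hi
  · have : Infinite (FreeGroup (K false)) := by
      have : Nonempty (K false) := ‹Nonempty γ›
      infer_instance
    exact (Cardinal.natCast_lt_aleph0 (n := 3)).le.trans (Cardinal.aleph0_le_mk _)
  · rintro (_ | _)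
    exacts [hP, hQ]
  · rintro (_ | _) (_ | _) h
    exacts [(h rfl).elim, hPQ, hPQ.symm, (h rfl).elim]
  · rintro (_ | _) (_ | _) h
    · exact (h rfl).elim
    · rintro x hx _ ⟨q, hq, rfl⟩
      exact hg x hx q hq
    · rintro x hx _ ⟨q, hq, rfl⟩
      exact hf x hx q hq
    · exact (h rfl).elim

end PrefPres

namespace PrefPres

open Function

section
variable {κ : Type}

/-- reduced word -/
noncomputable def wd (g : FreeGroup κ) : List (κ × Bool) :=
  @FreeGroup.toWord κ (Classical.decEq κ) g

theorem wd_red (g : FreeGroup κ) : FreeGroup.IsReduced (wd g) :=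
  @FreeGroup.isReduced_toWord κ (Classical.decEq κ) g

theorem mk_wd (g : FreeGroup κ) : FreeGroup.mk (wd g) = g :=
  @FreeGroup.mk_toWord κ (Classical.decEq κ) g

theorem wd_mk {L : List (κ × Bool)} (h : FreeGroup.IsReduced L) : wd (FreeGroup.mk L) = L := by
  let _ := Classical.decEq κ
  unfold wd
  rw [FreeGroup.toWord_mk]
  exact h.reduce_eq

theorem wd_one : wd (1 : FreeGroup κ) = [] := wd_mk FreeGroup.IsReduced.nil

theorem wd_eq_nil {g : FreeGroup κ} : wd g = [] ↔ g = 1 := by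
  constructor
  · intro h
    rw [← mk_wd g, h]; rfl
  · rintro rfl; exact wd_one

/-- letters -/
def ell (a : κ × Bool) : FreeGroup κ := FreeGroup.mk [a]

/-- inverse letter -/
def iv (a : κ × Bool) : κ × Bool := (a.1, !a.2)

theorem iv_iv (a : κ × Bool) : iv (iv a) = a := by simp [iv]

theorem iv_ne (a : κ × Bool) : iv a ≠ a := by
  intro h
  have := congrArg Prod.snd h
  simp [iv] at this

theorem ell_iv (a : κ × Bool) : ell (iv a) = (ell a)⁻¹ := by
  simp [ell, iv, FreeGroup.inv_mk, FreeGroup.invRev]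

theorem ell_inj {a b : κ × Bool} (h : ell a = ell b) : a = b := by
  have := congrArg wd h
  rw [ell, ell, wd_mk FreeGroup.IsReduced.singleton, wd_mk FreeGroup.IsReduced.singleton] at this
  simpa using this

/-- first letter -/
noncomputable def hd (g : FreeGroup κ) : Option (κ × Bool) := (wd g).head?

theorem hd_one : hd (1 : FreeGroup κ) = none := by simp [hd, wd_one]

theorem hd_none {g : FreeGroup κ} (h : hd g = none) : g = 1 := by
  rw [← wd_eq_nil]; simpa [hd] using h

theorem mk_append (L L' : List (κ × Bool)) :
    FreeGroup.mk (L ++ L') = FreeGroup.mk L * FreeGroup.mk L' := FreeGroup.mul_mk.symm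

theorem wd_append {L : List (κ × Bool)} (hL : FreeGroup.IsReduced L) (g : FreeGroup κ)
    (h : ∀ x ∈ L.getLast?, ∀ y ∈ hd g, x.1 = y.1 → x.2 = y.2) :
    wd (FreeGroup.mk L * g) = L ++ wd g := by
  conv_lhs => rw [← mk_wd g, ← mk_append]
  apply wd_mk
  unfold FreeGroup.IsReduced
  rw [List.isChain_append]
  exact ⟨hL, wd_red g, h⟩

theorem ne_iv_iff (a b : κ × Bool) : b ≠ iv a ↔ (a.1 = b.1 → a.2 = b.2) := by
  obtain ⟨a1, a2⟩ := a
  obtain ⟨b1, b2⟩ := b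
  simp only [iv, ne_eq, Prod.mk.injEq, not_and]
  constructor
  · intro h h1
    have := h h1.symm
    revert this; cases a2 <;> cases b2 <;> simp
  · intro h h1 h2
    have := h h1.symm
    revert this h2; cases a2 <;> cases b2 <;> simp

theorem wd_ell_mul (a : κ × Bool) (g : FreeGroup κ) (h : hd g ≠ some (iv a)) :
    wd (ell a * g) = a :: wd g := by
  refine wd_append (L := [a]) FreeGroup.IsReduced.singleton g ?_
  intro x hx y hy
  simp at hx
  subst hx
  rw [← ne_iv_iff]
  rintro rfl
  exact h hy

theorem hd_ell_mul (a : κ × Bool) (g : FreeGroup κ) (h : hd g ≠ some (iv a)) :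
    hd (ell a * g) = some a := by
  rw [hd, wd_ell_mul a g h]; rfl

theorem hd_decomp {a : κ × Bool} {g : FreeGroup κ} (h : hd g = some a) :
    hd ((ell a)⁻¹ * g) ≠ some (iv a) ∧ wd g = a :: wd ((ell a)⁻¹ * g) := by
  unfold hd at h
  obtain ⟨L, hL⟩ : ∃ L, wd g = a :: L := by
    cases hw : wd g with
    | nil => simp [hw] at h
    | cons b L => simp [hw] at h; exact ⟨L, by rw [h]⟩
  have hred : FreeGroup.IsReduced (a :: L) := hL ▸ wd_red g
  have hg : (ell a)⁻¹ * g = FreeGroup.mk L := by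
    rw [inv_mul_eq_iff_eq_mul, ell, ← mk_append]
    conv_lhs => rw [← mk_wd g, hL]
    rfl
  have hLr : FreeGroup.IsReduced L := List.IsChain.tail hred
  have hwL : wd ((ell a)⁻¹ * g) = L := by rw [hg, wd_mk hLr]
  refine ⟨?_, by rw [hwL, hL]⟩
  rw [hd, hwL]
  cases L with
  | nil => simp
  | cons b L =>
    simp only [List.head?_cons, ne_eq, Option.some.injEq]
    exact (ne_iv_iff a b).2 (FreeGroup.isReduced_cons_cons.1 hred).1

theorem hd_iff (a : κ × Bool) (g : FreeGroup κ) :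
    hd g = some a ↔ hd ((ell a)⁻¹ * g) ≠ some (iv a) := by
  constructor
  · exact fun h => (hd_decomp h).1
  · intro h
    have := hd_ell_mul a _ h
    rwa [mul_inv_cancel_left] at this

theorem hd_cross (n : ℕ) : ∀ (a b : κ × Bool) (g : FreeGroup κ), (wd g).length = n →
    hd g ≠ some a → hd (g * ell b) = some a → g = 1 ∧ b = a := by
  induction n with
  | zero =>
    intro a b g hn h1 h2
    have hg : g = 1 := by rw [← wd_eq_nil]; simpa using hn
    subst hg
    refine ⟨rfl, ?_⟩
    rw [one_mul, hd, ell, wd_mk FreeGroup.IsReduced.singleton] at h2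
    simpa using h2
  | succ n ih =>
    intro a b g hn h1 h2
    exfalso
    rcases hc : hd g with _ | c
    · have := hd_none hc
      subst this
      simp [wd_one] at hn
    obtain ⟨h3, h4⟩ := hd_decomp hc
    have hca : c ≠ a := by rintro rfl; exact h1 hc
    have e : g * ell b = ell c * ((ell c)⁻¹ * g * ell b) := by group
    by_cases h5 : hd ((ell c)⁻¹ * g * ell b) = some (iv c)
    · obtain ⟨h6, h7⟩ := ih (iv c) b ((ell c)⁻¹ * g) (by rw [h4] at hn; simpa using hn) h3 h5
      rw [e, h6, h7, ell_iv] at h2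
      simp [hd_one] at h2
    · rw [e, hd_ell_mul c _ h5] at h2
      exact hca (by simpa using h2)

/-! ### free factor injectivity -/

theorem map_inl_red {β γ : Type} (x : FreeGroup β) :
    FreeGroup.IsReduced ((wd x).map fun p => ((Sum.inl p.1 : β ⊕ γ), p.2)) := by
  unfold FreeGroup.IsReduced
  rw [List.isChain_map]
  refine (wd_red x).imp ?_
  rintro ⟨a, a'⟩ ⟨b, b'⟩ h
  simpa using h

theorem map_inr_red {β γ : Type} (x : FreeGroup γ) :
    FreeGroup.IsReduced ((wd x).map fun p => ((Sum.inr p.1 : β ⊕ γ), p.2)) := by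
  unfold FreeGroup.IsReduced
  rw [List.isChain_map]
  refine (wd_red x).imp ?_
  rintro ⟨a, a'⟩ ⟨b, b'⟩ h
  simpa using h

theorem hd_inl_mul {β γ : Type} (x : FreeGroup β) (hx : x ≠ 1) (p : FreeGroup (β ⊕ γ))
    (hp : ∀ y ∈ hd p, y.1.isRight) : ∃ y ∈ hd (FreeGroup.map Sum.inl x * p), y.1.isLeft := by
  have e : FreeGroup.map Sum.inl x =
      FreeGroup.mk ((wd x).map fun p => ((Sum.inl p.1 : β ⊕ γ), p.2)) := by
    conv_lhs => rw [← mk_wd x]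
    rfl
  rw [e, hd, wd_append (map_inl_red x)]
  · obtain ⟨a, L, hL⟩ := List.exists_cons_of_ne_nil (fun h => hx (wd_eq_nil.1 h))
    rw [hL]
    simp
  · intro y hy z hz hyz
    have h1 := hp z hz
    have := List.mem_of_getLast? hy
    simp only [List.mem_map] at this
    obtain ⟨q, _, rfl⟩ := this
    simp [← hyz] at h1

theorem hd_inr_mul {β γ : Type} (x : FreeGroup γ) (hx : x ≠ 1) (p : FreeGroup (β ⊕ γ))
    (hp : ∀ y ∈ hd p, y.1.isLeft) : ∃ y ∈ hd (FreeGroup.map Sum.inr x * p), y.1.isRight := by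
  have e : FreeGroup.map Sum.inr x =
      FreeGroup.mk ((wd x).map fun p => ((Sum.inr p.1 : β ⊕ γ), p.2)) := by
    conv_lhs => rw [← mk_wd x]
    rfl
  rw [e, hd, wd_append (map_inr_red x)]
  · obtain ⟨a, L, hL⟩ := List.exists_cons_of_ne_nil (fun h => hx (wd_eq_nil.1 h))
    rw [hL]
    simp
  · intro y hy z hz hyz
    have h1 := hp z hz
    have := List.mem_of_getLast? hy
    simp only [List.mem_map] at this
    obtain ⟨q, _, rfl⟩ := this
    simp [← hyz] at h1

/-- if `f : FreeGroup α → FreeGroup β` and `g : FreeGroup γ → FreeGroup δ` are injective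
then so is the map of free products -/
theorem free_prod_inj {α β γ δ : Type} (f : α → FreeGroup β) (hf : Injective (FreeGroup.lift f))
    (g : γ → FreeGroup δ) (hg : Injective (FreeGroup.lift g)) :
    Injective (FreeGroup.lift (Sum.elim (fun a => FreeGroup.map (Sum.inl : β → β ⊕ δ) (f a))
      (fun c => FreeGroup.map (Sum.inr : δ → β ⊕ δ) (g c)))) := by
  have e1 : FreeGroup.lift (fun a => FreeGroup.map (Sum.inl : β → β ⊕ δ) (f a)) =
      (FreeGroup.map Sum.inl).comp (FreeGroup.lift f) := by ext; simp
  have e2 : FreeGroup.lift (fun a => FreeGroup.map (Sum.inr : δ → β ⊕ δ) (g a)) =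
      (FreeGroup.map Sum.inr).comp (FreeGroup.lift g) := by ext; simp
  have i1 : Injective (FreeGroup.lift (fun a => FreeGroup.map (Sum.inl : β → β ⊕ δ) (f a))) := by
    rw [e1]; exact (FreeGroup.map_injective Sum.inl_injective).comp hf
  have i2 : Injective (FreeGroup.lift (fun a => FreeGroup.map (Sum.inr : δ → β ⊕ δ) (g a))) := by
    rw [e2]; exact (FreeGroup.map_injective Sum.inr_injective).comp hg
  rcases isEmpty_or_nonempty γ with hγ | hγ
  · let i : FreeGroup (α ⊕ γ) ≃* FreeGroup α := FreeGroup.freeGroupCongr (Equiv.sumEmpty α γ)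
    have : FreeGroup.lift (Sum.elim (fun a => FreeGroup.map (Sum.inl : β → β ⊕ δ) (f a))
      (fun c => FreeGroup.map (Sum.inr : δ → β ⊕ δ) (g c))) =
      (FreeGroup.lift (fun a => FreeGroup.map (Sum.inl : β → β ⊕ δ) (f a))).comp
        i.toMonoidHom := by
      ext x
      rcases x with x | x
      · simp [i]
      · exact (hγ.false x).elim
    rw [this]
    exact i1.comp i.injective
  have hQne : ∀ c : γ, g c ≠ 1 := by
    intro c hc
    have := @hg (FreeGroup.of c) 1 (by simp [hc])
    exact FreeGroup.of_ne_one c this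
  obtain ⟨c⟩ := hγ
  have hδ : Nonempty δ := by
    by_contra h
    rw [not_nonempty_iff] at h
    exact hQne c (Subsingleton.elim _ _)
  rcases isEmpty_or_nonempty α with hα | hα
  · let i : FreeGroup (α ⊕ γ) ≃* FreeGroup γ := FreeGroup.freeGroupCongr (Equiv.emptySum α γ)
    have : FreeGroup.lift (Sum.elim (fun a => FreeGroup.map (Sum.inl : β → β ⊕ δ) (f a))
      (fun c => FreeGroup.map (Sum.inr : δ → β ⊕ δ) (g c))) =
      (FreeGroup.lift (fun a => FreeGroup.map (Sum.inr : δ → β ⊕ δ) (g a))).comp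
        i.toMonoidHom := by
      ext x
      rcases x with x | x
      · exact (hα.false x).elim
      · simp [i]
    rw [this]
    exact i2.comp i.injective
  obtain ⟨a⟩ := hα
  have hPne : f a ≠ 1 := by
    intro hc
    have := @hf (FreeGroup.of a) 1 (by simp [hc])
    exact FreeGroup.of_ne_one a this
  have : Nonempty γ := ⟨c⟩
  refine ping_pong (Y := FreeGroup (β ⊕ δ)) _ _ {p | ∃ y ∈ hd p, y.1.isRight}
    {p | ∃ y ∈ hd p, y.1.isLeft} ?_ ?_ ?_ ?_ ?_
  · exact ⟨_, hd_inr_mul (g c) (hQne c) 1 (by simp [hd_one])⟩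
  · exact ⟨_, hd_inl_mul (f a) hPne 1 (by simp [hd_one])⟩
  · rw [Set.disjoint_left]
    rintro p ⟨y, hy, hy'⟩ ⟨z, hz, hz'⟩
    have : y = z := Option.some.inj (hy.symm.trans hz)
    subst this
    rcases y with ⟨y | y, _⟩ <;> simp at hy' hz'
  · rintro x hx p ⟨y, hy, hy'⟩
    rw [e1, MonoidHom.comp_apply, smul_eq_mul]
    refine hd_inl_mul _ (fun h => hx (hf (by rw [h, map_one]))) p ?_
    intro z hz
    have : y = z := Option.some.inj (hy.symm.trans hz)
    exact this ▸ hy'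
  · rintro x hx p ⟨y, hy, hy'⟩
    rw [e2, MonoidHom.comp_apply, smul_eq_mul]
    refine hd_inr_mul _ (fun h => hx (hg (by rw [h, map_one]))) p ?_
    intro z hz
    have : y = z := Option.some.inj (hy.symm.trans hz)
    exact this ▸ hy'

theorem lift_eq_map {α β : Type} (f : α → β) :
    (FreeGroup.lift fun a => FreeGroup.of (f a)) = FreeGroup.map f := by
  ext; simp

/-- `R5` -/
theorem rk_adjoin_mono {W' W : Subgroup (FreeGroup κ)} (h : W' ≤ W) (hW' : W'.FG) (hW : W.FG)
    (c : FreeGroup κ) (hc : rk (gen W [c]) = rk W + 1) : rk (gen W' [c]) = rk W' + 1 := by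
  obtain ⟨b, hb, hbr⟩ := exists_basis' hW
  obtain ⟨b', hb', hbr'⟩ := exists_basis' hW'
  have hinj : Injective (FreeGroup.lift (Sum.elim b [c].get)) := by
    apply inj_of_rk
    rw [gen_eq_range W b hbr, hc]
    simp
  have : ∀ i, ∃ u, FreeGroup.lift b u = b' i := by
    intro i
    have : b' i ∈ (FreeGroup.lift b).range := by
      rw [hbr]
      apply h
      rw [← hbr']
      exact ⟨FreeGroup.of i, by simp⟩
    exact this
  choose u hu using this
  have hui : Injective (FreeGroup.lift u) := by
    have : FreeGroup.lift b' = (FreeGroup.lift b).comp (FreeGroup.lift u) := by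
      ext i; simp [hu]
    rw [this] at hb'
    exact Injective.of_comp hb'
  have hp := hinj.comp (free_prod_inj u hui (fun i : Fin [c].length => FreeGroup.of i)
    (by rw [lift_eq_map]; exact FreeGroup.map_injective injective_id))
  have e : FreeGroup.lift (Sum.elim b' [c].get) = (FreeGroup.lift (Sum.elim b [c].get)).comp
      (FreeGroup.lift (Sum.elim (fun a => FreeGroup.map Sum.inl (u a))
      (fun c => FreeGroup.map Sum.inr (FreeGroup.of c)))) := by
    ext x
    rcases x with x | x
    · simp only [FreeGroup.lift_apply_of, Sum.elim_inl, MonoidHom.comp_apply]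
      rw [← MonoidHom.comp_apply]
      have : (FreeGroup.lift (Sum.elim b [c].get)).comp (FreeGroup.map Sum.inl) =
          FreeGroup.lift b := by ext; simp
      rw [this, hu]
    · simp
  rw [← gen_eq_range W' b' hbr' [c], rk_range_of_inj]
  · simp
  · rw [e]; exact hp

end

end PrefPres

namespace PrefPres

open Function

section
variable {κ : Type}

/-- half tree -/
def Hf (p : FreeGroup κ) (a : κ × Bool) : Set (FreeGroup κ) := {g | hd (p⁻¹ * g) = some a}

theorem Hf_compl (p : FreeGroup κ) (a : κ × Bool) (g : FreeGroup κ) :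
    g ∈ Hf p a ↔ g ∉ Hf (p * ell a) (iv a) := by
  simp only [Hf, Set.mem_ofPred_eq]
  rw [hd_iff, mul_inv_rev, mul_assoc]

theorem Hf_compl' (p : FreeGroup κ) (a : κ × Bool) (g : FreeGroup κ) :
    g ∈ Hf (p * ell a) (iv a) ↔ g ∉ Hf p a := by
  rw [Hf_compl p a, not_not]

theorem Hf_mul (c p : FreeGroup κ) (a : κ × Bool) (g : FreeGroup κ) :
    c * g ∈ Hf (c * p) a ↔ g ∈ Hf p a := by
  simp only [Hf, Set.mem_ofPred_eq]
  rw [show (c * p)⁻¹ * (c * g) = p⁻¹ * g by group]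

theorem Hf_cross {p g : FreeGroup κ} {a b : κ × Bool} (h1 : g ∉ Hf p a)
    (h2 : g * ell b ∈ Hf p a) : g = p ∧ b = a := by
  simp only [Hf, Set.mem_ofPred_eq] at h1 h2
  rw [← mul_assoc] at h2
  obtain ⟨h3, h4⟩ := hd_cross _ a b (p⁻¹ * g) rfl h1 h2
  exact ⟨(inv_mul_eq_one.1 h3).symm, h4⟩

theorem self_notMem_Hf (p : FreeGroup κ) (a : κ × Bool) : p ∉ Hf p a := by
  simp [Hf, hd_one]

theorem ell_mem_Hf (p : FreeGroup κ) (a : κ × Bool) : p * ell a ∈ Hf p a := by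
  rw [Hf_compl]; exact self_notMem_Hf _ _

/-- reachability within `S` -/
def Reach (S : Set (FreeGroup κ)) : FreeGroup κ → FreeGroup κ → Prop :=
  Relation.ReflTransGen fun x y => x ∈ S ∧ y ∈ S ∧ ∃ a, y = x * ell a

theorem Reach.symm {S : Set (FreeGroup κ)} {x y : FreeGroup κ} (h : Reach S x y) : Reach S y x := by
  unfold Reach at h
  induction h with
  | refl => exact Relation.ReflTransGen.refl
  | tail _ h ih =>
    obtain ⟨hx, hy, a, rfl⟩ := h
    exact Relation.ReflTransGen.head ⟨hy, hx, iv a, by rw [ell_iv]; group⟩ ih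

theorem Reach.trans {S : Set (FreeGroup κ)} {x y z : FreeGroup κ} (h : Reach S x y)
    (h' : Reach S y z) : Reach S x z := Relation.ReflTransGen.trans h h'

theorem Reach.mono {S T : Set (FreeGroup κ)} (hST : S ⊆ T) {x y : FreeGroup κ} (h : Reach S x y) :
    Reach T x y := by
  unfold Reach at h
  induction h with
  | refl => exact Relation.ReflTransGen.refl
  | tail _ h ih => exact Relation.ReflTransGen.tail ih ⟨hST h.1, hST h.2.1, h.2.2⟩

theorem Reach.left {S : Set (FreeGroup κ)} {w x y : FreeGroup κ} (hw : ∀ s ∈ S, w * s ∈ S)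
    (h : Reach S x y) : Reach S (w * x) (w * y) := by
  unfold Reach at h
  induction h with
  | refl => exact Relation.ReflTransGen.refl
  | tail _ h ih =>
    obtain ⟨hx, hy, a, rfl⟩ := h
    exact Relation.ReflTransGen.tail ih ⟨hw _ hx, hw _ hy, a, by group⟩

theorem Reach.step {S : Set (FreeGroup κ)} {x : FreeGroup κ} {a : κ × Bool} (hx : x ∈ S)
    (hy : x * ell a ∈ S) : Reach S x (x * ell a) :=
  Relation.ReflTransGen.single ⟨hx, hy, a, rfl⟩

/-- connected subsets -/
def Conn (S : Set (FreeGroup κ)) : Prop := ∀ x ∈ S, ∀ y ∈ S, Reach S x y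

theorem conn_sep {Y : Set (FreeGroup κ)} (hY : Conn Y) {p : FreeGroup κ} {a : κ × Bool}
    (hp : p ∈ Y) (hpa : p * ell a ∉ Y) {y : FreeGroup κ} (hy : y ∈ Y) : y ∉ Hf p a := by
  have := hY p hp y hy
  unfold Reach at this
  induction this with
  | refl => exact self_notMem_Hf p a
  | tail _ h ih =>
    obtain ⟨h1, h2, b, rfl⟩ := h
    intro hmem
    obtain ⟨rfl, rfl⟩ := Hf_cross (ih h1) hmem
    exact hpa h2

theorem conn_disj {Y : Set (FreeGroup κ)} (hY : Conn Y) {p q : FreeGroup κ} {a b : κ × Bool}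
    (hp : p ∈ Y) (hpa : p * ell a ∉ Y) (hq : q ∈ Y) (hqb : q * ell b ∉ Y)
    (hne : ¬ (p = q ∧ a = b)) {x : FreeGroup κ} (hx : x ∈ Hf p a) : x ∉ Hf q b := by
  have key : ∀ L : List (κ × Bool), FreeGroup.IsReduced (a :: L) →
      p * FreeGroup.mk (a :: L) ∉ Hf q b := by
    intro L
    induction L using List.reverseRecOn with
    | nil =>
      intro _ h
      exact hne (Hf_cross (conn_sep hY hq hqb hp) h)
    | append_singleton L e ih =>
      intro hred hmem
      have hred' : FreeGroup.IsReduced (a :: L) :=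
        List.IsChain.left_of_append (l₁ := a :: L) (l₂ := [e]) hred
      have e1 : p * FreeGroup.mk (a :: (L ++ [e])) = p * FreeGroup.mk (a :: L) * ell e := by
        rw [← List.cons_append, mk_append, mul_assoc]; rfl
      rw [e1] at hmem
      obtain ⟨h1, h2⟩ := Hf_cross (ih hred') hmem
      apply conn_sep hY hp hpa hq
      rw [← h1]
      simp only [Hf, Set.mem_ofPred_eq, inv_mul_cancel_left, hd]
      rw [wd_mk hred']
      rfl
  have hx' : hd (p⁻¹ * x) = some a := hx
  obtain ⟨_, h2⟩ := hd_decomp hx'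
  have := key _ (h2 ▸ wd_red (p⁻¹ * x))
  rw [← h2, mk_wd] at this
  simpa using this

/-- orbit of a set under a subgroup -/
def orb {G : Type} [Group G] (W : Subgroup G) (S : Set G) : Set G := {g | ∃ w ∈ W, ∃ u ∈ S, g = w * u}

theorem orb_inv {G : Type} [Group G] {W : Subgroup G} {S : Set G} {w : G} (hw : w ∈ W) :
    ∀ s ∈ orb W S, w * s ∈ orb W S := by
  rintro _ ⟨v, hv, u, hu, rfl⟩
  exact ⟨w * v, W.mul_mem hw hv, u, hu, by group⟩

theorem sub_orb {G : Type} [Group G] (W : Subgroup G) (S : Set G) : S ⊆ orb W S :=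
  fun u hu => ⟨1, W.one_mem, u, hu, by simp⟩

theorem conn_orb {X : Subgroup (FreeGroup κ)} {S : Set (FreeGroup κ)} (hS : Conn S)
    (hXS : ∀ x ∈ X, ∀ s ∈ S, x * s ∈ S) {l : List (FreeGroup κ)}
    (hl : ∀ c ∈ l, ∃ u ∈ S, c * u ∈ S) : Conn (orb (gen X l) S) := by
  rcases S.eq_empty_or_nonempty with rfl | ⟨u0, hu0⟩
  · rintro x ⟨_, _, _, h, _⟩
    exact h.elim
  set Y := orb (gen X l) S with hYdef
  have hSY : S ⊆ Y := sub_orb _ _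
  let K : Subgroup (FreeGroup κ) :=
    { carrier := {w | w ∈ gen X l ∧ Reach Y u0 (w * u0)}
      one_mem' := ⟨Subgroup.one_mem _, by rw [one_mul]; exact Relation.ReflTransGen.refl⟩
      mul_mem' := by
        rintro a b ⟨ha, ha'⟩ ⟨hb, hb'⟩
        refine ⟨Subgroup.mul_mem _ ha hb, ha'.trans ?_⟩
        rw [mul_assoc]
        exact hb'.left (orb_inv ha)
      inv_mem' := by
        rintro a ⟨ha, ha'⟩
        refine ⟨Subgroup.inv_mem _ ha, ?_⟩
        have := ha'.left (orb_inv (Subgroup.inv_mem _ ha))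
        rw [inv_mul_cancel_left] at this
        exact this.symm }
  have hK : gen X l ≤ K := by
    rw [gen_le]
    constructor
    · intro x hx
      exact ⟨le_gen _ _ hx, (hS u0 hu0 _ (hXS x hx u0 hu0)).mono hSY⟩
    · intro c hc
      refine ⟨mem_gen _ hc, ?_⟩
      obtain ⟨u, hu, hcu⟩ := hl c hc
      refine ((hS u0 hu0 _ hcu).mono hSY).trans ?_
      exact ((hS u hu u0 hu0).mono hSY).left (orb_inv (mem_gen _ hc))
  have key : ∀ y ∈ Y, Reach Y u0 y := by
    rintro _ ⟨w, hw, u, hu, rfl⟩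
    refine (hK hw).2.trans ?_
    exact ((hS u0 hu0 u hu).mono hSY).left (orb_inv hw)
  intro x hx y hy
  exact (key x hx).symm.trans (key y hy)

theorem zpow_of_subsingleton {γ : Type} [Subsingleton γ] (i : γ) (x : FreeGroup γ) :
    ∃ n : ℤ, x = FreeGroup.of i ^ n := by
  have : x ∈ (⊤ : Subgroup (FreeGroup γ)) := Subgroup.mem_top x
  rw [← FreeGroup.closure_range_of] at this
  have h2 : Set.range (FreeGroup.of : γ → FreeGroup γ) = {FreeGroup.of i} := by
    ext y
    constructor
    · rintro ⟨k, rfl⟩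
      rw [Subsingleton.elim k i]; rfl
    · rintro rfl
      exact ⟨i, rfl⟩
  rw [h2, Subgroup.mem_closure_singleton] at this
  obtain ⟨n, hn⟩ := this
  exact ⟨n, hn.symm⟩

theorem ping_step {W : Subgroup (FreeGroup κ)} (hW : W.FG) {Y : Set (FreeGroup κ)} (hY : Conn Y)
    (hWY : ∀ w ∈ W, ∀ y ∈ Y, w * y ∈ Y) {q c : FreeGroup κ} {a : κ × Bool} (hq : q ∈ Y)
    (hv : c * (q * ell a) ∈ Y) (hc : ∀ y ∈ Y, c * y ∉ Y) : rk (gen W [c]) = rk W + 1 := by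
  set v := c * (q * ell a) with hvdef
  have hqa : q * ell a ∉ Y := fun h => hc _ h hv
  have hcq : v * ell (iv a) = c * q := by rw [ell_iv, hvdef]; group
  have hva : v * ell (iv a) ∉ Y := by rw [hcq]; exact hc q hq
  obtain ⟨b, hb, hbr⟩ := exists_basis' hW
  have hmov : ∀ w ∈ W, ∀ (p : FreeGroup κ) (e : κ × Bool), p * ell e ∉ Y → w * p * ell e ∉ Y := by
    intro w hw p e h h'
    apply h
    have := hWY _ (W.inv_mem hw) _ h'
    rwa [mul_assoc, inv_mul_cancel_left] at this
  have d1 : ∀ x ∈ Hf q a, x ∉ Hf v (iv a) := fun x hx =>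
    conn_disj hY hq hqa hv hva (fun h => iv_ne a h.2.symm) hx
  have d2 : ∀ x ∈ Hf v (iv a), x ∉ Hf q a := fun x hx h => d1 x h hx
  have s1 : ∀ x, c * x ∈ Hf v (iv a) ↔ x ∉ Hf q a := by
    intro x
    rw [Hf_compl v (iv a), iv_iv, hcq, Hf_mul]
  have pos : ∀ (n : ℕ) x, x ∉ Hf q a → c ^ (n + 1) * x ∈ Hf v (iv a) := by
    intro n
    induction n with
    | zero => intro x hx; rw [zero_add, pow_one]; exact (s1 x).2 hx
    | succ n ih =>
      intro x hx
      rw [pow_succ', mul_assoc, s1]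
      exact d2 _ (ih x hx)
  have neg : ∀ (n : ℕ) x, x ∉ Hf v (iv a) → c⁻¹ ^ (n + 1) * x ∈ Hf q a := by
    have s2 : ∀ x, x ∉ Hf v (iv a) → c⁻¹ * x ∈ Hf q a := by
      intro x hx
      have := s1 (c⁻¹ * x)
      rw [mul_inv_cancel_left] at this
      by_contra h
      exact hx (this.2 h)
    intro n
    induction n with
    | zero => intro x hx; rw [zero_add, pow_one]; exact s2 x hx
    | succ n ih =>
      intro x hx
      rw [pow_succ', mul_assoc]
      exact s2 _ (d1 _ (ih x hx))
  have hinj : Injective (FreeGroup.lift (Sum.elim b [c].get)) := by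
    have : Nonempty (Fin [c].length) := ⟨⟨0, by simp⟩⟩
    refine ping_pong (Y := FreeGroup κ) _ _ (Hf v (iv a) ∪ Hf q a) (Hf v (iv a) ∪ Hf q a)ᶜ
      ⟨_, Or.inr (ell_mem_Hf q a)⟩ ⟨q, ?_⟩ disjoint_compl_right ?_ ?_
    · rintro (h | h)
      · exact conn_sep hY hv hva hq h
      · exact self_notMem_Hf q a h
    · intro x hx p hp
      have hw : FreeGroup.lift b x ∈ W := hbr.le ⟨x, rfl⟩
      have hw1 : FreeGroup.lift b x ≠ 1 := fun h => hx (hb (by rw [h, map_one]))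
      generalize FreeGroup.lift b x = w at hw hw1
      rw [smul_eq_mul]
      have hne : ∀ z : FreeGroup κ, w * z ≠ z := fun z h => hw1 (by simpa using h)
      rcases hp with hp | hp
      · rw [← Hf_mul w] at hp
        rintro (h | h)
        · exact conn_disj hY (hWY w hw _ hv) (hmov w hw _ _ hva) hv hva (fun h => hne _ h.1) hp h
        · exact conn_disj hY (hWY w hw _ hv) (hmov w hw _ _ hva) hq hqa
            (fun h => iv_ne _ h.2) hp h
      · rw [← Hf_mul w] at hp
        rintro (h | h)
        · exact conn_disj hY (hWY w hw _ hq) (hmov w hw _ _ hqa) hv hva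
            (fun h => iv_ne _ h.2.symm) hp h
        · exact conn_disj hY (hWY w hw _ hq) (hmov w hw _ _ hqa) hq hqa (fun h => hne _ h.1) hp h
    · intro x hx p hp
      obtain ⟨n, rfl⟩ := zpow_of_subsingleton (γ := Fin 1) (⟨0, by simp⟩ : Fin 1) x
      have hn : n ≠ 0 := by rintro rfl; simp at hx
      have e : FreeGroup.lift [c].get (FreeGroup.of (⟨0, by simp⟩ : Fin 1) ^ n) = c ^ n := by
        rw [map_zpow, FreeGroup.lift_apply_of]
        rfl
      rw [e, smul_eq_mul]
      have hp1 : p ∉ Hf v (iv a) := fun h => hp (Or.inl h)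
      have hp2 : p ∉ Hf q a := fun h => hp (Or.inr h)
      rcases Int.lt_or_gt_of_ne hn with h | h
      · right
        obtain ⟨k, rfl⟩ : ∃ k : ℕ, n = -((k + 1 : ℕ) : ℤ) := ⟨(-n - 1).toNat, by omega⟩
        rw [zpow_neg, zpow_natCast, ← inv_pow]
        exact neg k p hp1
      · left
        obtain ⟨k, rfl⟩ : ∃ k : ℕ, n = ((k + 1 : ℕ) : ℤ) := ⟨(n - 1).toNat, by omega⟩
        rw [zpow_natCast]
        exact pos k p hp2
  rw [← gen_eq_range W b hbr, rk_range_of_inj _ hinj]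
  simp

end

end PrefPres

namespace PrefPres

open Function

section
variable {κ : Type}

theorem gen_ext {G : Type} [Group G] {X : Subgroup G} {l l' : List G}
    (h : ∀ Z : Subgroup G, X ≤ Z → ((∀ x ∈ l, x ∈ Z) ↔ ∀ x ∈ l', x ∈ Z)) : gen X l = gen X l' := by
  apply le_antisymm
  · rw [gen_le]
    exact ⟨le_gen _ _, (h _ (le_gen _ _)).2 fun x hx => mem_gen _ hx⟩
  · rw [gen_le]
    exact ⟨le_gen _ _, (h _ (le_gen _ _)).1 fun x hx => mem_gen _ hx⟩

theorem list_replace {G : Type} [Group G] (P : G → Prop) (Q : Subgroup G → Prop) (l : List G)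
    (h : ∀ e ∈ l, ∃ e', P e' ∧ ∀ Z, Q Z → (e ∈ Z ↔ e' ∈ Z)) :
    ∃ l' : List G, l'.length = l.length ∧ (∀ x ∈ l', P x) ∧
      ∀ Z, Q Z → ((∀ x ∈ l, x ∈ Z) ↔ ∀ x ∈ l', x ∈ Z) := by
  induction l with
  | nil => exact ⟨[], rfl, by simp, by simp⟩
  | cons c l ih =>
    obtain ⟨l', h1, h2, h3⟩ := ih fun e he => h e (List.mem_cons_of_mem _ he)
    obtain ⟨c', h4, h5⟩ := h c List.mem_cons_self
    refine ⟨c' :: l', by simp [h1], ?_, ?_⟩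
    · simpa using ⟨h4, h2⟩
    · intro Z hZ
      rw [List.forall_mem_cons, List.forall_mem_cons, h5 Z hZ, h3 Z hZ]

/-- iterated one-orbit extensions -/
inductive Ext (X : Subgroup (FreeGroup κ)) (S₀ : Set (FreeGroup κ)) : ℕ → Set (FreeGroup κ) → Prop
  | zero : Ext X S₀ 0 S₀
  | succ (n : ℕ) (S : Set (FreeGroup κ)) (q : FreeGroup κ) (a : κ × Bool) (h : Ext X S₀ n S)
      (hq : q ∈ S) : Ext X S₀ (n + 1) (S ∪ {g | ∃ x ∈ X, g = x * (q * ell a)})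

theorem Ext.props {X : Subgroup (FreeGroup κ)} {S₀ : Set (FreeGroup κ)}
    (hinv : ∀ x ∈ X, ∀ s ∈ S₀, x * s ∈ S₀) (hconn : Conn S₀) {n : ℕ} {S : Set (FreeGroup κ)}
    (h : Ext X S₀ n S) : (∀ x ∈ X, ∀ s ∈ S, x * s ∈ S) ∧ Conn S ∧ S₀ ⊆ S := by
  induction h with
  | zero => exact ⟨hinv, hconn, subset_rfl⟩
  | succ n S q a h hq ih =>
    obtain ⟨h1, h2, h3⟩ := ih
    refine ⟨?_, ?_, h3.trans Set.subset_union_left⟩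
    · rintro x hx s (hs | ⟨y, hy, rfl⟩)
      · exact Or.inl (h1 x hx s hs)
      · exact Or.inr ⟨x * y, X.mul_mem hx hy, by group⟩
    · set T := S ∪ {g | ∃ x ∈ X, g = x * (q * ell a)} with hT
      have key : ∀ y ∈ T, Reach T q y := by
        rintro y (hy | ⟨x, hx, rfl⟩)
        · exact (h2 q hq y hy).mono Set.subset_union_left
        · refine ((h2 q hq _ (h1 x hx q hq)).mono Set.subset_union_left).trans ?_
          rw [← mul_assoc]
          exact Reach.step (Or.inl (h1 x hx q hq)) (Or.inr ⟨x, hx, by group⟩)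
      intro x hx y hy
      exact (key x hx).symm.trans (key y hy)

theorem lemmaN {X : Subgroup (FreeGroup κ)} (hX : X.FG) {S₀ : Set (FreeGroup κ)}
    (hinv : ∀ x ∈ X, ∀ s ∈ S₀, x * s ∈ S₀) (hconn : Conn S₀) :
    ∀ (s n : ℕ) (S : Set (FreeGroup κ)) (l : List (FreeGroup κ)), l.length = s → Ext X S₀ n S →
      (∀ c ∈ l, ∃ u ∈ S, c * u ∈ S) →
      (∃ c l', l'.length + 1 = s ∧ gen X (c :: l') = gen X l ∧ ∃ u ∈ S₀, c * u ∈ S₀) ∨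
        rk (gen X l) = rk X + s := by
  intro s
  induction s with
  | zero =>
    intro n S l hl _ _
    right
    rw [List.length_eq_zero_iff.1 hl, gen_nil, add_zero]
  | succ s ihs =>
    intro n
    induction n with
    | zero =>
      intro S l hl hE hg
      left
      cases hE
      obtain ⟨c, l', rfl⟩ := List.exists_cons_of_length_eq_add_one hl
      exact ⟨c, l', by simpa using hl, rfl, hg c List.mem_cons_self⟩
    | succ n ihn =>
      intro T l hl hE hg
      rcases hE with _ | ⟨_, S, q, a, hE, hq⟩
      obtain ⟨hSinv, hSconn, _⟩ := hE.props hinv hconn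
      set h := q * ell a with hh
      have hcl : ∀ c ∈ l, (∃ u ∈ S, c * u ∈ S) ∨
          ∃ c', c' * h ∈ S ∧ ∀ Z : Subgroup (FreeGroup κ), X ≤ Z → (c ∈ Z ↔ c' ∈ Z) := by
        intro c hc
        obtain ⟨u, hu | ⟨x, hx, rfl⟩, hcu | ⟨y, hy, hcu⟩⟩ := hg c hc
        · exact Or.inl ⟨u, hu, hcu⟩
        · refine Or.inr ⟨c⁻¹ * y, ?_, ?_⟩
          · have : c⁻¹ * y * h = u := by rw [mul_assoc, ← hcu]; group
            rwa [this]
          · intro Z hZ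
            rw [Subgroup.mul_mem_cancel_right _ (hZ hy), Subgroup.inv_mem_iff]
        · refine Or.inr ⟨c * x, ?_, ?_⟩
          · rwa [mul_assoc]
          · intro Z hZ
            rw [Subgroup.mul_mem_cancel_right _ (hZ hx)]
        · left
          have h1 : c * x = y := by
            rw [← mul_assoc] at hcu
            exact mul_right_cancel hcu
          have : c ∈ X := by
            rw [← Subgroup.mul_mem_cancel_right _ hx, h1]; exact hy
          exact ⟨q, hq, hSinv c this q hq⟩
      by_cases hall : ∀ c ∈ l, ∃ u ∈ S, c * u ∈ S
      · exact ihn S l hl hE hall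
      push Not at hall
      obtain ⟨c, hc, hbad⟩ := hall
      have hc2 := hcl c hc
      rcases hc2 with ⟨u, hu, hu'⟩ | ⟨c', hc', hcc'⟩
      · exact (hbad u hu hu').elim
      obtain ⟨l₁, hl₁⟩ : ∃ l₁, l.Perm (c :: l₁) := ⟨_, by
        classical exact List.perm_cons_erase hc⟩
      obtain ⟨l'', hlen, hgood, heq⟩ := list_replace (fun e => ∃ u ∈ S, e * u ∈ S)
        (fun Z => X ≤ Z ∧ c' ∈ Z) l₁ (by
          intro e he
          rcases hcl e (hl₁.mem_iff.2 (List.mem_cons_of_mem _ he)) with hge | ⟨e', he', hee'⟩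
          · exact ⟨e, hge, fun Z _ => Iff.rfl⟩
          · refine ⟨e' * c'⁻¹, ⟨c' * h, hc', ?_⟩, ?_⟩
            · rwa [← mul_assoc, inv_mul_cancel_right]
            · rintro Z ⟨hZ, hcZ⟩
              rw [hee' Z hZ, Subgroup.mul_mem_cancel_right _ (Z.inv_mem hcZ)])
      have hgen1 : gen X l = gen X (c' :: l'') := by
        rw [gen_perm X hl₁]
        apply gen_ext
        intro Z hZ
        rw [List.forall_mem_cons, List.forall_mem_cons, hcc' Z hZ]
        constructor
        · rintro ⟨h1, h2⟩
          exact ⟨h1, (heq Z ⟨hZ, h1⟩).1 h2⟩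
        · rintro ⟨h1, h2⟩
          exact ⟨h1, (heq Z ⟨hZ, h1⟩).2 h2⟩
      have hlen' : l''.length = s := by
        have := hl₁.length_eq
        simp only [List.length_cons] at this
        omega
      have hW := gen_fg hX l''
      have hYc : Conn (orb (gen X l'') S) := conn_orb hSconn hSinv hgood
      by_cases hex : ∃ y ∈ orb (gen X l'') S, c' * y ∈ orb (gen X l'') S
      · obtain ⟨_, ⟨w₀, hw₀, u, hu, rfl⟩, w₁, hw₁, v, hv, huv⟩ := hex
        have hgen2 : gen X (c' :: l'') = gen X ((w₁⁻¹ * c' * w₀) :: l'') := by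
          apply gen_ext
          intro Z hZ
          rw [List.forall_mem_cons, List.forall_mem_cons]
          refine and_congr_left fun hZl => ?_
          have hle : gen X l'' ≤ Z := gen_le.2 ⟨hZ, hZl⟩
          rw [Subgroup.mul_mem_cancel_right _ (hle hw₀),
            Subgroup.mul_mem_cancel_left _ (Z.inv_mem (hle hw₁))]
        rw [hgen1, hgen2]
        refine ihn S _ (by simp [hlen']) hE ?_
        rw [List.forall_mem_cons]
        refine ⟨⟨u, hu, ?_⟩, hgood⟩
        have : w₁⁻¹ * c' * w₀ * u = v := by
          rw [mul_assoc, mul_assoc, huv]; group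
        rwa [this]
      · push Not at hex
        have hstep := ping_step hW hYc (fun w hw => orb_inv hw) (sub_orb _ _ hq)
          (sub_orb _ _ hc') hex
        rcases ihs n S l'' hlen' hE hgood with ⟨d, l', h1, h2, h3⟩ | hr
        · left
          refine ⟨d, c' :: l', by simp; omega, ?_, h3⟩
          rw [hgen1, gen_perm X (List.Perm.swap c' d l'), gen_cons' X c' (d :: l'), h2,
            gen_cons' X c' l'']
        · right
          rw [hgen1, gen_cons', hstep, hr]
          omega

theorem Ext.path {X : Subgroup (FreeGroup κ)} {S₀ : Set (FreeGroup κ)}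
    (L : List (κ × Bool)) : ∀ (n : ℕ) (S : Set (FreeGroup κ)) (p : FreeGroup κ), p ∈ S →
    Ext X S₀ n S → ∃ n' S', Ext X S₀ n' S' ∧ S ⊆ S' ∧ p * FreeGroup.mk L ∈ S' := by
  induction L with
  | nil =>
    intro n S p hp hE
    exact ⟨n, S, hE, subset_rfl, by rw [← FreeGroup.one_eq_mk, mul_one]; exact hp⟩
  | cons a L ih =>
    intro n S p hp hE
    obtain ⟨n', S', h1, h2, h3⟩ := ih (n + 1) _ (p * ell a)
      (Or.inr ⟨1, X.one_mem, by group⟩) (Ext.succ n S p a hE hp)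
    refine ⟨n', S', h1, Set.subset_union_left.trans h2, ?_⟩
    have : FreeGroup.mk (a :: L) = ell a * FreeGroup.mk L := mk_append [a] L
    rwa [this, ← mul_assoc]

theorem Ext.exists_list {X : Subgroup (FreeGroup κ)} {S₀ : Set (FreeGroup κ)}
    {u : FreeGroup κ} (hu : u ∈ S₀) (l : List (FreeGroup κ)) :
    ∃ n S, Ext X S₀ n S ∧ u ∈ S ∧ ∀ c ∈ l, c * u ∈ S := by
  induction l with
  | nil => exact ⟨0, S₀, Ext.zero, hu, by simp⟩
  | cons c l ih =>
    obtain ⟨n, S, h1, h2, h3⟩ := ih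
    obtain ⟨n', S', h4, h5, h6⟩ := Ext.path (wd (u⁻¹ * (c * u))) n S u h2 h1
    rw [mk_wd, mul_inv_cancel_left] at h6
    refine ⟨n', S', h4, h5 h2, ?_⟩
    rw [List.forall_mem_cons]
    exact ⟨h6, fun x hx => h5 (h3 x hx)⟩

theorem lemmaN' {X : Subgroup (FreeGroup κ)} (hX : X.FG) {S₀ : Set (FreeGroup κ)}
    (hinv : ∀ x ∈ X, ∀ s ∈ S₀, x * s ∈ S₀) (hconn : Conn S₀) (hne : S₀.Nonempty)
    (l : List (FreeGroup κ)) :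
    (∃ c l', l'.length + 1 = l.length ∧ gen X (c :: l') = gen X l ∧ ∃ u ∈ S₀, c * u ∈ S₀) ∨
        rk (gen X l) = rk X + l.length := by
  obtain ⟨u, hu⟩ := hne
  obtain ⟨n, S, hE, hS, hl⟩ := Ext.exists_list (X := X) hu l
  exact lemmaN hX hinv hconn _ n S l rfl hE fun c hc => ⟨u, hS, hl c hc⟩

/-- a f.g. subgroup acts cocompactly on a connected set -/
theorem exists_core {X : Subgroup (FreeGroup κ)} (hX : X.FG) :
    ∃ U : Finset (FreeGroup κ), U.Nonempty ∧ Conn (orb X (U : Set (FreeGroup κ))) := by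
  obtain ⟨T, hT⟩ := hX
  have hgen : gen (⊥ : Subgroup (FreeGroup κ)) T.toList = X := by
    unfold gen
    rw [bot_sup_eq, ← hT]
    congr 1
    ext x; simp
  obtain ⟨n, S, hE, hS, hl⟩ := Ext.exists_list (X := (⊥ : Subgroup (FreeGroup κ)))
    (S₀ := {1}) (u := 1) rfl T.toList
  obtain ⟨h1, h2, h3⟩ := hE.props (by intro x hx s hs; rw [Subgroup.mem_bot] at hx; simpa [hx] using hs)
    (by
      rintro x hx y hy
      rw [Set.mem_singleton_iff] at hx hy
      subst hx hy
      exact Relation.ReflTransGen.refl)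
  have hfin : S.Finite := by
    clear h1 h2 h3 hS hl
    induction hE with
    | zero => exact Set.finite_singleton _
    | succ n S q a h hq ih =>
      refine ih.union ((Set.finite_singleton (q * ell a)).subset ?_)
      rintro g ⟨x, hx, rfl⟩
      rw [Subgroup.mem_bot] at hx
      simp [hx]
  have := conn_orb h2 h1 (l := T.toList) (fun c hc => ⟨1, hS, hl c hc⟩)
  rw [hgen] at this
  refine ⟨hfin.toFinset, ⟨1, by simpa using hS⟩, by simpa using this⟩

end

end PrefPres

namespace PrefPres

open Function

section
variable {κ : Type}

theorem fg_map {G G' : Type} [Group G] [Group G'] {X : Subgroup G} (hX : X.FG) (φ : G →* G') :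
    (X.map φ).FG := by
  obtain ⟨n, f, hf⟩ := exists_hom_of_fg hX
  rw [← hf, ← MonoidHom.range_comp]
  exact range_fg _

theorem lemmaK (φ : FreeGroup κ →* FreeGroup κ) (hφ : Injective φ) :
    ∀ (n : ℕ) (U : Finset (FreeGroup κ)), U.card = n → U.Nonempty →
    ∀ (X : Subgroup (FreeGroup κ)) (l : List (FreeGroup κ)), X.FG →
    Conn (orb X (U : Set (FreeGroup κ))) → X.map φ ≤ gen X l → rk (gen X l) < rk X + l.length →
    ∃ (X' : Subgroup (FreeGroup κ)) (l' : List (FreeGroup κ)), X'.FG ∧ l'.length < l.length ∧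
      X'.map φ ≤ gen X' l' ∧
      ∀ K : Subgroup (FreeGroup κ), K.map φ ≤ K → (gen X l ≤ K ↔ gen X' l' ≤ K) := by
  classical
  intro n
  induction n using Nat.strong_induction_on with
  | _ n ih =>
  intro U hUn hUne X l hX hconn hφX hrk
  obtain ⟨u0, hu0⟩ := hUne
  rcases lemmaN' hX (fun x hx => orb_inv hx) hconn ⟨u0, sub_orb _ _ hu0⟩ l with
    ⟨c, l', hlen, hgen, _, ⟨x₁, hx₁, u₁, hu₁, rfl⟩, x₂, hx₂, u₂, hu₂, hcu⟩ | h
  swap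
  · omega
  by_cases hcX : c ∈ X
  · have hg : gen X l = gen X l' := by
      rw [← hgen]
      apply gen_ext
      intro Z hZ
      rw [List.forall_mem_cons]
      exact ⟨fun h => h.2, fun h => ⟨hZ hcX, h⟩⟩
    exact ⟨X, l', hX, by omega, hg ▸ hφX, fun K _ => by rw [hg]⟩
  obtain ⟨d, hd⟩ : ∃ d, d = x₂⁻¹ * c * x₁ := ⟨_, rfl⟩
  have hdc : ∀ Z : Subgroup (FreeGroup κ), X ≤ Z → (d ∈ Z ↔ c ∈ Z) := by
    intro Z hZ
    rw [hd, Subgroup.mul_mem_cancel_right _ (hZ hx₁),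
      Subgroup.mul_mem_cancel_left _ (Z.inv_mem (hZ hx₂))]
  have hdu : d * u₁ = u₂ := by
    rw [hd, mul_assoc, mul_assoc, hcu]; group
  have hdX : d ∉ X := by rw [hdc X le_rfl]; exact hcX
  have hune : u₁ ≠ u₂ := by
    intro h
    rw [h] at hdu
    have : d = 1 := by simpa using hdu
    exact hdX (this ▸ X.one_mem)
  have hgen' : gen X (d :: l') = gen X l := by
    rw [← hgen]
    apply gen_ext
    intro Z hZ
    rw [List.forall_mem_cons, List.forall_mem_cons, hdc Z hZ]
  set Xh := gen X [d] with hXh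
  have hdXh : d ∈ Xh := mem_gen _ List.mem_cons_self
  have hXhfg : Xh.FG := gen_fg hX _
  have hW : gen Xh l' = gen X l := by rw [← hgen', gen_cons X d l']
  have hWfg : (gen X l).FG := gen_fg hX _
  have hbig : gen Xh (φ d :: l') = gen (gen X l) [φ d] := by rw [gen_cons', hW]
  have hmap : Xh.map φ = gen (X.map φ) [φ d] := by rw [hXh, gen_map]; rfl
  have hdl : d ∈ gen X l := by rw [← hgen']; exact mem_gen _ List.mem_cons_self
  have hconn' : Conn (orb Xh ((U.erase u₂ : Finset (FreeGroup κ)) : Set (FreeGroup κ))) := by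
    have h1 : Conn (orb Xh (orb X (U : Set (FreeGroup κ)))) := by
      refine conn_orb hconn (fun x hx => orb_inv hx) ?_
      intro e he
      simp only [List.mem_singleton] at he
      subst he
      exact ⟨u₁, sub_orb _ _ hu₁, by rw [hdu]; exact sub_orb _ _ hu₂⟩
    convert h1 using 1
    ext g
    constructor
    · rintro ⟨w, hw, u, hu, rfl⟩
      exact ⟨w, hw, u, sub_orb _ _ (Finset.mem_of_mem_erase hu), rfl⟩
    · rintro ⟨w, hw, _, ⟨x, hx, u, hu, rfl⟩, rfl⟩
      have hwx : w * x ∈ Xh := Xh.mul_mem hw (le_gen _ _ hx)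
      by_cases huu : u = u₂
      · subst huu
        refine ⟨w * x * d, Xh.mul_mem hwx hdXh, u₁, ?_, ?_⟩
        · simpa using ⟨hu₁, hune⟩
        · rw [mul_assoc _ d, hdu]; group
      · exact ⟨w * x, hwx, u, by simpa using ⟨hu, huu⟩, by group⟩
  have hrk' : rk (gen Xh (φ d :: l')) < rk Xh + (φ d :: l').length := by
    rw [hbig]
    have a1 := rk_gen_le hX [d]
    have a2 := rk_gen_le hWfg [φ d]
    have a3 := rk_gen_le hXhfg l'
    rw [hW] at a3
    rw [← hXh] at a1
    simp only [List.length_cons, List.length_nil] at a1 a2 ⊢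
    by_contra hcon
    by_cases hcase : rk Xh = rk X + 1
    · omega
    · have h1 : rk (gen (gen X l) [φ d]) = rk (gen X l) + 1 := by omega
      have h2 := rk_adjoin_mono hφX (fg_map hX φ) hWfg (φ d) h1
      rw [← hmap, rk_map hXhfg φ hφ, rk_map hX φ hφ] at h2
      omega
  obtain ⟨X', l2, h1, h2, h3, h4⟩ := ih _ (by rw [← hUn]; exact Finset.card_erase_lt_of_mem hu₂)
    (U.erase u₂) rfl ⟨u₁, by simpa using ⟨hune, hu₁⟩⟩ Xh (φ d :: l') hXhfg hconn' (by
      rw [hbig, hmap, gen_le]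
      refine ⟨hφX.trans (le_gen _ _), ?_⟩
      simp only [List.mem_singleton, forall_eq]
      exact mem_gen _ List.mem_cons_self) hrk'
  refine ⟨X', l2, h1, ?_, h3, ?_⟩
  · simp only [List.length_cons] at h2; omega
  · intro K hK
    rw [← h4 K hK, hbig, gen_le (X := gen X l)]
    simp only [List.mem_singleton, forall_eq]
    refine ⟨fun h => ⟨h, hK ⟨d, h hdl, rfl⟩⟩, fun h => h.1⟩

theorem lemmaK' (φ : FreeGroup κ →* FreeGroup κ) (hφ : Injective φ)
    (X : Subgroup (FreeGroup κ)) (l : List (FreeGroup κ)) (hX : X.FG)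
    (h : X.map φ ≤ gen X l) (hr : rk (gen X l) ≠ rk X + l.length) :
    ∃ (X' : Subgroup (FreeGroup κ)) (l' : List (FreeGroup κ)), X'.FG ∧ l'.length < l.length ∧
      X'.map φ ≤ gen X' l' ∧
      ∀ K : Subgroup (FreeGroup κ), K.map φ ≤ K → (gen X l ≤ K ↔ gen X' l' ≤ K) := by
  obtain ⟨U, hU, hc⟩ := exists_core hX
  exact lemmaK φ hφ _ U rfl hU X l hX hc h (lt_of_le_of_ne (rk_gen_le hX l) hr)

/-- the increasing chain -/
def chain {G : Type} [Group G] (φ : G →* G) (X : Subgroup G) (l : List G) : ℕ → Subgroup G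
  | 0 => X
  | n + 1 => gen (chain φ X l n) (l.map φ^[n])

theorem exists_fin_support {α β : Type} (w : FreeGroup (α ⊕ ℕ × β)) :
    ∃ (n : ℕ) (v : FreeGroup (α ⊕ Fin n × β)),
      FreeGroup.map (Sum.map id (Prod.map Fin.val id)) v = w := by
  have mono : ∀ n m, n ≤ m → ∀ v : FreeGroup (α ⊕ Fin n × β), ∃ v' : FreeGroup (α ⊕ Fin m × β),
      FreeGroup.map (Sum.map id (Prod.map Fin.val id)) v' =
        FreeGroup.map (Sum.map (id : α → α) (Prod.map Fin.val (id : β → β))) v := by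
    intro n m h v
    refine ⟨FreeGroup.map (Sum.map id (Prod.map (Fin.castLE h) id)) v, ?_⟩
    rw [FreeGroup.map.comp]
    congr 2
    ext x
    rcases x with x | ⟨x, y⟩ <;> simp
  induction w using FreeGroup.induction_on with
  | C1 => exact ⟨0, 1, map_one _⟩
  | of x =>
    rcases x with x | ⟨k, y⟩
    · exact ⟨0, FreeGroup.of (Sum.inl x), by simp⟩
    · exact ⟨k + 1, FreeGroup.of (Sum.inr (⟨k, by omega⟩, y)), by simp⟩
  | inv_of x h =>
    obtain ⟨n, v, hv⟩ := h
    exact ⟨n, v⁻¹, by rw [map_inv]; exact congrArg _ hv⟩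
  | mul x y hx hy =>
    obtain ⟨n, v, hv⟩ := hx
    obtain ⟨m, u, hu⟩ := hy
    obtain ⟨v', hv'⟩ := mono n (max n m) (le_max_left _ _) v
    obtain ⟨u', hu'⟩ := mono m (max n m) (le_max_right _ _) u
    exact ⟨max n m, v' * u', by rw [map_mul, hv', hu', hv, hu]⟩

theorem stable (φ : FreeGroup κ →* FreeGroup κ) (hφ : Injective φ)
    (A : Subgroup (FreeGroup κ)) (hA : A.FG) :
    ∃ (m s : ℕ) (b : Fin m → FreeGroup κ) (d : Fin s → FreeGroup κ),
      Injective (FreeGroup.lift (Sum.elim b (fun p : ℕ × Fin s => φ^[p.1] (d p.2)))) ∧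
      (∀ j, φ (b j) ∈ (FreeGroup.lift (Sum.elim b d)).range) ∧
      ∀ K : Subgroup (FreeGroup κ), K.map φ ≤ K → (A ≤ K ↔ (∀ j, b j ∈ K) ∧ ∀ i, d i ∈ K) := by
  classical
  let V : Subgroup (FreeGroup κ) → List (FreeGroup κ) → Prop := fun X l =>
    X.FG ∧ X.map φ ≤ gen X l ∧
      ∀ K : Subgroup (FreeGroup κ), K.map φ ≤ K → (A ≤ K ↔ gen X l ≤ K)
  have hex : ∃ s, ∃ X l, l.length = s ∧ V X l := by
    obtain ⟨T, hT⟩ := hA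
    have hgen : gen (⊥ : Subgroup (FreeGroup κ)) T.toList = A := by
      unfold gen
      rw [bot_sup_eq, ← hT]
      congr 1
      ext x; simp
    exact ⟨_, ⊥, T.toList, rfl, Subgroup.FG.bot, by simp, fun K _ => by rw [hgen]⟩
  obtain ⟨X, l, hls, hV⟩ := Nat.find_spec hex
  have hmin : ∀ X' l', V X' l' → l'.length = l.length → rk (gen X' l') = rk X' + l'.length := by
    intro X' l' hV' hl'
    by_contra hne
    obtain ⟨X2, l2, h1, h2, h3, h4⟩ := lemmaK' φ hφ X' l' hV'.1 hV'.2.1 hne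
    refine Nat.find_min hex (m := l2.length) (by omega) ⟨X2, l2, rfl, h1, h3, ?_⟩
    intro K hK
    rw [hV'.2.2 K hK, h4 K hK]
  have hVn : ∀ n, V (chain φ X l n) (l.map φ^[n]) := by
    intro n
    induction n with
    | zero => simpa [chain] using hV
    | succ n ih =>
      obtain ⟨h1, h2, h3⟩ := ih
      have e : l.map φ^[n + 1] = (l.map φ^[n]).map φ := by
        rw [List.map_map, iterate_succ']
      refine ⟨gen_fg h1 _, ?_, ?_⟩
      · rw [chain, gen_map, e]
        exact gen_mono h2 _
      · intro K hK
        rw [h3 K hK, chain, gen_le (X := gen _ _), e]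
        refine ⟨fun h => ⟨h, ?_⟩, fun h => h.1⟩
        intro x hx
        obtain ⟨y, hy, rfl⟩ := List.mem_map.1 hx
        exact hK ⟨y, h (mem_gen _ hy), rfl⟩
  have hrk : ∀ n, rk (chain φ X l n) = rk X + n * l.length := by
    intro n
    induction n with
    | zero => simp [chain]
    | succ n ih =>
      rw [chain, hmin _ _ (hVn n) (by simp), ih, List.length_map]
      ring
  obtain ⟨b, hb, hbr⟩ := exists_basis' hV.1
  have hXK : ∀ K, X ≤ K ↔ ∀ j, b j ∈ K := by
    intro K
    conv_lhs => rw [← hbr]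
    rw [FreeGroup.range_lift_eq_closure, Subgroup.closure_le]
    exact Set.range_subset_iff
  have hlK : ∀ (f : FreeGroup κ → FreeGroup κ) (K : Subgroup (FreeGroup κ)),
      (∀ x ∈ l.map f, x ∈ K) ↔ ∀ i : Fin l.length, f (l.get i) ∈ K := by
    intro f K
    rw [List.forall_mem_map]
    constructor
    · intro h i
      exact h _ (List.get_mem _ _)
    · intro h x hx
      obtain ⟨i, rfl⟩ := List.get_of_mem hx
      exact h i
  have hrange : ∀ n, (FreeGroup.lift (Sum.elim b
      (fun p : Fin n × Fin l.length => φ^[p.1] (l.get p.2)))).range = chain φ X l n := by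
    intro n
    refine eq_of_forall_ge_iff fun K => ?_
    rw [range_lift_sum, sup_le_iff, hbr, FreeGroup.range_lift_eq_closure, Subgroup.closure_le,
      Set.range_subset_iff]
    induction n with
    | zero => simp [chain]
    | succ n ih =>
      rw [chain, gen_le, ← ih, hlK, and_assoc]
      refine and_congr_right fun _ => ?_
      constructor
      · intro h
        exact ⟨fun p => h (p.1.castSucc, p.2), fun i => h (Fin.last n, i)⟩
      · rintro ⟨h1, h2⟩ ⟨k, i⟩
        induction k using Fin.lastCases with
        | last => exact h2 i
        | cast k => exact h1 (k, i)
  have hinj : ∀ n, Injective (FreeGroup.lift (Sum.elim b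
      (fun p : Fin n × Fin l.length => φ^[p.1] (l.get p.2)))) := by
    intro n
    apply inj_of_rk
    rw [hrange, hrk]
    simp
  refine ⟨rk X, l.length, b, l.get, ?_, ?_, ?_⟩
  · rw [injective_iff_map_eq_one]
    intro w hw
    obtain ⟨n, v, rfl⟩ := exists_fin_support w
    rw [← MonoidHom.comp_apply] at hw
    have : (FreeGroup.lift (Sum.elim b (fun p : ℕ × Fin l.length => φ^[p.1] (l.get p.2)))).comp
        (FreeGroup.map (Sum.map id (Prod.map Fin.val id))) = FreeGroup.lift (Sum.elim b
      (fun p : Fin n × Fin l.length => φ^[p.1] (l.get p.2))) := by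
      ext x
      rcases x with x | x <;> simp
    rw [this] at hw
    have := hinj n (hw.trans (map_one _).symm)
    rw [this, map_one]
  · intro j
    rw [gen_eq_range X b hbr]
    apply hV.2.1
    refine ⟨b j, ?_, rfl⟩
    exact (hXK X).1 le_rfl j
  · intro K hK
    rw [hV.2.2 K hK, gen_le, hXK]
    refine and_congr_right fun _ => ?_
    have := hlK id K
    simpa using this

end

end PrefPres

namespace PrefPres

open Function

theorem conj_pow_mem {P : Type} [Group P] (σ : P) (N : Subgroup P)
    (h : ∀ n ∈ N, σ * n * σ⁻¹ ∈ N) (k : ℕ) : ∀ n ∈ N, σ ^ k * n * (σ ^ k)⁻¹ ∈ N := by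
  induction k with
  | zero => intro n hn; simpa using hn
  | succ k ih =>
    intro n hn
    have := h _ (ih n hn)
    have e : σ ^ (k + 1) * n * (σ ^ (k + 1))⁻¹ = σ * (σ ^ k * n * (σ ^ k)⁻¹) * σ⁻¹ := by
      rw [pow_succ']; group
    rwa [e]

theorem normal_form {P : Type} [Group P] (σ : P) (N : Subgroup P)
    (h : ∀ n ∈ N, σ * n * σ⁻¹ ∈ N) : ∀ p ∈ gen N [σ], ∃ a b : ℕ, ∃ n ∈ N,
      p = (σ ^ a)⁻¹ * n * σ ^ b := by
  let K : Subgroup P :=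
    { carrier := {p | ∃ a b : ℕ, ∃ n ∈ N, p = (σ ^ a)⁻¹ * n * σ ^ b}
      one_mem' := ⟨0, 0, 1, N.one_mem, by simp⟩
      mul_mem' := by
        rintro _ _ ⟨a, b, n, hn, rfl⟩ ⟨c, d, m, hm, rfl⟩
        refine ⟨a + c, d + b, (σ ^ c * n * (σ ^ c)⁻¹) * (σ ^ b * m * (σ ^ b)⁻¹),
          N.mul_mem (conj_pow_mem σ N h c n hn) (conj_pow_mem σ N h b m hm), ?_⟩
        have e1 : (σ ^ c)⁻¹ * σ ^ b = σ ^ b * (σ ^ c)⁻¹ := by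
          rw [← zpow_natCast, ← zpow_natCast, ← zpow_neg, ← zpow_add, ← zpow_add, add_comm]
        have e2 : (σ ^ (a + c))⁻¹ = (σ ^ a)⁻¹ * (σ ^ c)⁻¹ := by
          rw [add_comm, pow_add, mul_inv_rev]
        rw [e2, add_comm d b, pow_add σ b d]
        simp only [mul_assoc, inv_mul_cancel_left]
        rw [← mul_assoc ((σ ^ c)⁻¹) (σ ^ b), e1]
        simp only [mul_assoc]
      inv_mem' := by
        rintro _ ⟨a, b, n, hn, rfl⟩
        exact ⟨b, a, n⁻¹, N.inv_mem hn, by group⟩ }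
  have : gen N [σ] ≤ K := by
    rw [gen_le]
    refine ⟨fun n hn => ⟨0, 0, n, hn, by simp⟩, ?_⟩
    simp only [List.mem_singleton, forall_eq]
    exact ⟨0, 1, 1, N.one_mem, by simp⟩
  exact fun p hp => this hp

theorem conj_iterate {κ M : Type} [Group M] (i : FreeGroup κ →* M) (τ : M)
    (φ : FreeGroup κ →* FreeGroup κ) (hφ : ∀ g, τ * i g * τ⁻¹ = i (φ g)) (k : ℕ)
    (g : FreeGroup κ) : τ ^ k * i g * (τ ^ k)⁻¹ = i (φ^[k] g) := by
  induction k with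
  | zero => simp
  | succ k ih =>
    rw [iterate_succ_apply', ← hφ, ← ih, pow_succ']
    group

theorem asc {κ M : Type} [Group M] (i : FreeGroup κ →* M) (hi : Injective i) (τ : M)
    (hτ : ∀ g, ∃ g', τ * i g * τ⁻¹ = i g') (ε : M →* Multiplicative ℤ) (hε : ∀ g, ε (i g) = 1)
    (hετ : ε τ ≠ 1) (A : Subgroup (FreeGroup κ)) (hA : A.FG) :
    ∃ (m r : ℕ) (w : Fin m → FreeGroup (Fin m ⊕ Fin r)),
      Injective (FreeGroup.lift (fun j : Fin m => w j)) ∧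
      Nonempty (PresentedGroup (prefRels m r w) ≃* gen (A.map i) [τ]) := by
  choose φ0 hφ0 using hτ
  let φ : FreeGroup κ →* FreeGroup κ := MonoidHom.mk' φ0 (by
    intro a b
    apply hi
    rw [map_mul, ← hφ0, ← hφ0, ← hφ0, map_mul]
    group)
  have hφ : ∀ g, τ * i g * τ⁻¹ = i (φ g) := hφ0
  have hφi : Injective φ := by
    intro a b hab
    have := (hφ a).trans ((congrArg i hab).trans (hφ b).symm)
    exact hi (by simpa using this)
  obtain ⟨m, s, b, d, hinj, hw, hK⟩ := stable φ hφi A hA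
  choose w hw using hw
  have hbinj : Injective (FreeGroup.lift b) := by
    have : FreeGroup.lift b = (FreeGroup.lift (Sum.elim b
      (fun p : ℕ × Fin s => φ^[p.1] (d p.2)))).comp (FreeGroup.map Sum.inl) := by
      ext; simp
    rw [this]
    exact hinj.comp (FreeGroup.map_injective Sum.inl_injective)
  refine ⟨m, s, w, ?_, ?_⟩
  · have : (FreeGroup.lift (Sum.elim b d)).comp (FreeGroup.lift w) = φ.comp (FreeGroup.lift b) := by
      ext j; simp [hw]
    have h2 : Injective ((FreeGroup.lift (Sum.elim b d)).comp (FreeGroup.lift w)) := by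
      rw [this]; exact hφi.comp hbinj
    exact Injective.of_comp h2
  let f : Option (Fin m ⊕ Fin s) → M := fun o => o.elim τ (fun x => i (Sum.elim b d x))
  have hfmap : ∀ u, FreeGroup.lift f (FreeGroup.map some u) = i (FreeGroup.lift (Sum.elim b d) u) := by
    intro u
    have : (FreeGroup.lift f).comp (FreeGroup.map some) = i.comp (FreeGroup.lift (Sum.elim b d)) := by
      ext x; simp [f]
    exact DFunLike.congr_fun this u
  have hrel : ∀ r ∈ prefRels m s w, FreeGroup.lift f r = 1 := by
    rintro _ ⟨j, rfl⟩
    simp only [map_mul, map_inv, hfmap, hw, ← hφ]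
    simp [f]
  let θ : PresentedGroup (prefRels m s w) →* M := PresentedGroup.toGroup hrel
  let σ : PresentedGroup (prefRels m s w) := PresentedGroup.of none
  let z : Fin m ⊕ Fin s → PresentedGroup (prefRels m s w) := fun x => PresentedGroup.of (some x)
  have hθσ : θ σ = τ := PresentedGroup.toGroup.of hrel
  have hθz : ∀ x, θ (z x) = i (Sum.elim b d x) := fun x => PresentedGroup.toGroup.of hrel
  have hτg : τ ∈ gen (A.map i) [τ] := mem_gen _ List.mem_cons_self
  have hrange : θ.range = gen (A.map i) [τ] := by
    apply le_antisymm
    · let K := (gen (A.map i) [τ]).comap i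
      have hKφ : K.map φ ≤ K := by
        rintro _ ⟨g, hg, rfl⟩
        rw [Subgroup.mem_comap]
        rw [← hφ]
        exact Subgroup.mul_mem _ (Subgroup.mul_mem _ hτg hg) (Subgroup.inv_mem _ hτg)
      obtain ⟨h1, h2⟩ := (hK K hKφ).1 (fun g hg => le_gen _ _ ⟨g, hg, rfl⟩)
      rw [MonoidHom.range_eq_map, ← PresentedGroup.closure_range_of, MonoidHom.map_closure,
        Subgroup.closure_le]
      rintro _ ⟨_, ⟨o, rfl⟩, rfl⟩
      rcases o with _ | (x | x)
      · exact hθσ ▸ hτg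
      · have := hθz (Sum.inl x)
        change θ (z (Sum.inl x)) ∈ _
        rw [this]; exact h1 x
      · have := hθz (Sum.inr x)
        change θ (z (Sum.inr x)) ∈ _
        rw [this]; exact h2 x
    · have hτr : τ ∈ θ.range := ⟨σ, hθσ⟩
      rw [gen_le]
      constructor
      · rw [Subgroup.map_le_iff_le_comap]
        refine (hK (θ.range.comap i) ?_).2 ⟨fun j => ⟨_, hθz (Sum.inl j)⟩,
          fun j => ⟨_, hθz (Sum.inr j)⟩⟩
        rintro _ ⟨g, hg, rfl⟩
        rw [Subgroup.mem_comap, ← hφ]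
        exact Subgroup.mul_mem _ (Subgroup.mul_mem _ hτr hg) (Subgroup.inv_mem _ hτr)
      · simpa using hτr
  have hθinj : Injective θ := by
    let lam : FreeGroup (Fin m ⊕ ℕ × Fin s) →* PresentedGroup (prefRels m s w) :=
      FreeGroup.lift (Sum.elim (fun j => z (Sum.inl j))
        (fun p => σ ^ p.1 * z (Sum.inr p.2) * (σ ^ p.1)⁻¹))
    have hlam : ∀ v, θ (lam v) = i (FreeGroup.lift (Sum.elim b
        (fun p : ℕ × Fin s => φ^[p.1] (d p.2))) v) := by
      intro v
      have : θ.comp lam = i.comp (FreeGroup.lift (Sum.elim b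
        (fun p : ℕ × Fin s => φ^[p.1] (d p.2)))) := by
        ext x
        rcases x with x | ⟨k, x⟩
        · simp [lam, hθz]
        · simp [lam, hθz, hθσ, conj_iterate i τ φ hφ]
      exact DFunLike.congr_fun this v
    have hz : ∀ x, z x ∈ lam.range := by
      rintro (x | x)
      · exact ⟨FreeGroup.of (Sum.inl x), by simp [lam]⟩
      · exact ⟨FreeGroup.of (Sum.inr (0, x)), by simp [lam]⟩
    have hconj : ∀ n ∈ lam.range, σ * n * σ⁻¹ ∈ lam.range := by
      have hle : lam.range ≤ lam.range.comap (MulAut.conj σ).toMonoidHom := by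
        conv_lhs => rw [FreeGroup.range_lift_eq_closure]
        rw [Subgroup.closure_le]
        rintro _ ⟨x | ⟨k, x⟩, rfl⟩
        · change σ * z (Sum.inl x) * σ⁻¹ ∈ lam.range
          have hr : σ * z (Sum.inl x) * σ⁻¹ = FreeGroup.lift z (w x) := by
            have h1 : PresentedGroup.mk (prefRels m s w) (FreeGroup.of none *
                FreeGroup.of (some (Sum.inl x)) * (FreeGroup.of none)⁻¹ *
                (FreeGroup.map some (w x))⁻¹) = 1 :=
              PresentedGroup.one_of_mem ⟨x, rfl⟩
            have h2 : (PresentedGroup.mk (prefRels m s w)).comp (FreeGroup.map some) =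
                FreeGroup.lift z := by ext; simp [z]; rfl
            rw [map_mul, map_inv, mul_inv_eq_one] at h1
            rw [← h2]
            exact h1
          rw [hr]
          have : (FreeGroup.lift z).range ≤ lam.range := by
            rw [FreeGroup.range_lift_eq_closure, Subgroup.closure_le]
            rintro _ ⟨x, rfl⟩
            exact hz x
          exact this ⟨_, rfl⟩
        · refine ⟨FreeGroup.of (Sum.inr (k + 1, x)), ?_⟩
          simp only [lam, FreeGroup.lift_apply_of, Sum.elim_inr]
          simp only [MulEquiv.toMonoidHom_eq_coe, MonoidHom.coe_coe, MulAut.conj_apply]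
          rw [pow_succ']
          group
      exact fun n hn => hle hn
    have htop : ∀ p, p ∈ gen lam.range [σ] := by
      intro p
      have : (⊤ : Subgroup (PresentedGroup (prefRels m s w))) ≤ gen lam.range [σ] := by
        rw [← PresentedGroup.closure_range_of, Subgroup.closure_le]
        rintro _ ⟨o, rfl⟩
        rcases o with _ | x
        · exact mem_gen _ (List.mem_cons_self)
        · exact le_gen _ _ (hz x)
      exact this (Subgroup.mem_top p)
    rw [injective_iff_map_eq_one]
    intro p hp
    obtain ⟨a, c, _, ⟨v, rfl⟩, rfl⟩ := normal_form σ lam.range hconj p (htop p)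
    rw [map_mul, map_mul, map_inv, map_pow, map_pow, hθσ, hlam] at hp
    have hac : a = c := by
      have h1 := congrArg ε hp
      rw [map_mul, map_mul, map_inv, map_pow, map_pow, hε, map_one, mul_one,
        inv_mul_eq_one] at h1
      have h2 := congrArg Multiplicative.toAdd h1
      rw [toAdd_pow, toAdd_pow] at h2
      have h3 : (ε τ).toAdd ≠ 0 := fun h => hετ (by
        apply Multiplicative.toAdd.injective; rw [h]; rfl)
      simpa [h3] using h2
    subst hac
    have h4 : i (FreeGroup.lift (Sum.elim b
        (fun p : ℕ × Fin s => φ^[p.1] (d p.2))) v) = 1 := by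
      have h5 := eq_mul_inv_of_mul_eq hp
      rw [one_mul] at h5
      have h6 := eq_mul_of_inv_mul_eq h5
      rwa [mul_inv_cancel] at h6
    have h7 : v = 1 := hinj (hi (by rw [h4, map_one, map_one]))
    rw [h7, map_one]
    group
  have e : PresentedGroup (prefRels m s w) ≃* θ.range := MonoidHom.ofInjective hθinj
  rw [hrange] at e
  exact ⟨e⟩

/-- the free case -/
theorem free_case {κ : Type} {H : Type} [Group H] (W : Subgroup (FreeGroup κ)) (hW : W.FG)
    (hne : W ≠ ⊥) (e : H ≃* W) :
    ∃ (m r : ℕ) (w : Fin m → FreeGroup (Fin m ⊕ Fin r)),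
      Injective (FreeGroup.lift (fun j : Fin m => w j)) ∧
      Nonempty (PresentedGroup (prefRels m r w) ≃* H) := by
  obtain ⟨f, hf, hfr⟩ := exists_basis hW
  have hpos : rk W ≠ 0 := by
    intro h0
    apply hne
    rw [← hfr, MonoidHom.range_eq_bot_iff]
    have : IsEmpty (Fin (rk W)) := by rw [h0]; infer_instance
    ext x
    exact isEmptyElim x
  obtain ⟨r, hr⟩ := Nat.exists_eq_succ_of_ne_zero hpos
  refine ⟨0, r, fun j => j.elim0, ?_, ?_⟩
  · intro x y _
    exact Subsingleton.elim x y
  have hempty : prefRels 0 r (fun j => j.elim0) = ∅ := by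
    ext x
    simp [prefRels]
  let E1 : PresentedGroup (prefRels 0 r (fun j => j.elim0)) ≃*
      FreeGroup (Option (Fin 0 ⊕ Fin r)) :=
    (QuotientGroup.quotientMulEquivOfEq (by rw [hempty, Subgroup.normalClosure_empty])).trans
      QuotientGroup.quotientBot
  let g : Option (Fin 0 ⊕ Fin r) ≃ Fin (rk W) :=
    ((Equiv.optionCongr (Equiv.emptySum (Fin 0) (Fin r))).trans (finSuccEquiv r).symm).trans
      (finCongr hr.symm)
  let E2 : FreeGroup (Fin (rk W)) ≃* f.range := MonoidHom.ofInjective hf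
  exact ⟨(E1.trans (FreeGroup.freeGroupCongr g)).trans
    ((E2.trans (MulEquiv.subgroupCongr hfr)).trans e.symm)⟩

end PrefPres

namespace PrefPres

open Function

section
variable {I : Type} (J : Set I) (Ψ : freeFactor J →* FreeGroup I)

/-- basis of the big free group -/
abbrev Kap : Type := I ⊕ (ℕ × {i : I // i ∉ J})

/-- images of the basis of the free factor -/
noncomputable def psi (j : J) : FreeGroup I :=
  Ψ ⟨FreeGroup.of (j : I), Subgroup.subset_closure (Set.mem_image_of_mem _ j.2)⟩

theorem psi_inj (hΨ : Injective Ψ) : Injective (FreeGroup.lift (psi J Ψ)) := by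
  let ι : FreeGroup J →* freeFactor J := FreeGroup.lift fun j =>
    ⟨FreeGroup.of (j : I), Subgroup.subset_closure (Set.mem_image_of_mem _ j.2)⟩
  have h1 : FreeGroup.lift (psi J Ψ) = Ψ.comp ι := by
    ext j; simp [ι, psi]
  have h2 : (freeFactor J).subtype.comp ι = FreeGroup.map Subtype.val := by
    ext j; simp [ι]
  have h3 : Injective ((freeFactor J).subtype.comp ι) := by
    rw [h2]; exact FreeGroup.map_injective Subtype.val_injective
  have h4 : Injective ι := by
    rw [MonoidHom.coe_comp] at h3
    exact Injective.of_comp h3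
  rw [h1, MonoidHom.coe_comp]
  exact hΨ.comp h4

open Classical in
/-- decomposition of the basis -/
noncomputable def dec : Kap J → J ⊕ (ℕ × {i : I // i ∉ J})
  | Sum.inl i => if h : i ∈ J then Sum.inl ⟨i, h⟩ else Sum.inr (0, ⟨i, h⟩)
  | Sum.inr (k, i) => Sum.inr (k + 1, i)

theorem dec_inj : Injective (dec J) := by
  rintro (i | ⟨k, i⟩) (i' | ⟨k', i'⟩) h
  · simp only [dec] at h
    split_ifs at h with h1 h2 h2
    · simpa using h
    · simpa using h
  · simp only [dec] at h
    split_ifs at h with h1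
    simp at h
  · simp only [dec] at h
    split_ifs at h with h1
    simp at h
  · simpa [dec] using h

/-- the endomorphism of the big free group -/
noncomputable def phi : FreeGroup (Kap J) →* FreeGroup (Kap J) :=
  (FreeGroup.lift (Sum.elim (fun a => FreeGroup.map Sum.inl (psi J Ψ a))
    (fun c => FreeGroup.map Sum.inr (FreeGroup.of c)))).comp (FreeGroup.map (dec J))

theorem phi_inj (hΨ : Injective Ψ) : Injective (phi J Ψ) := by
  refine (free_prod_inj (psi J Ψ) (psi_inj J Ψ hΨ) (fun c => FreeGroup.of c) ?_).comp
    (FreeGroup.map_injective (dec_inj J))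
  rw [lift_eq_map]
  exact FreeGroup.map_injective injective_id

theorem phi_mem (j : J) : phi J Ψ (FreeGroup.of (Sum.inl j.1)) =
    FreeGroup.map Sum.inl (psi J Ψ j) := by
  simp [phi, dec]

theorem phi_notMem (i : I) (h : i ∉ J) : phi J Ψ (FreeGroup.of (Sum.inl i)) =
    FreeGroup.of (Sum.inr (0, ⟨i, h⟩)) := by
  simp [phi, dec, h]

theorem phi_inr (k : ℕ) (i : {i : I // i ∉ J}) : phi J Ψ (FreeGroup.of (Sum.inr (k, i))) =
    FreeGroup.of (Sum.inr (k + 1, i)) := by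
  simp [phi, dec]

/-- stable letter -/
def tt : MTRel J Ψ := PresentedGroup.of none

/-- the map of the big free group -/
noncomputable def iot : FreeGroup (Kap J) →* MTRel J Ψ :=
  FreeGroup.lift (Sum.elim (fun i => PresentedGroup.of (some i))
    (fun p => (tt J Ψ) ^ (p.1 + 1) * PresentedGroup.of (some p.2.1) * ((tt J Ψ) ^ (p.1 + 1))⁻¹))

theorem iot_inl (u : FreeGroup I) : iot J Ψ (FreeGroup.map Sum.inl u) =
    PresentedGroup.mk _ (FreeGroup.map some u) := by
  have : (iot J Ψ).comp (FreeGroup.map Sum.inl) =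
      (PresentedGroup.mk (mtRelsRel J Ψ)).comp (FreeGroup.map some) := by
    ext i; simp [iot]; rfl
  exact DFunLike.congr_fun this u

theorem iot_conj (g : FreeGroup (Kap J)) :
    tt J Ψ * iot J Ψ g * (tt J Ψ)⁻¹ = iot J Ψ (phi J Ψ g) := by
  have : (MulAut.conj (tt J Ψ)).toMonoidHom.comp (iot J Ψ) = (iot J Ψ).comp (phi J Ψ) := by
    ext x
    rcases x with i | ⟨k, i⟩
    · by_cases h : i ∈ J
      · have h1 : PresentedGroup.mk (mtRelsRel J Ψ) (FreeGroup.of none *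
            FreeGroup.of (some i) * (FreeGroup.of none)⁻¹ *
            (FreeGroup.map some (psi J Ψ ⟨i, h⟩))⁻¹) = 1 :=
          PresentedGroup.one_of_mem ⟨⟨i, h⟩, rfl⟩
        rw [map_mul, map_inv, mul_inv_eq_one] at h1
        rw [MonoidHom.comp_apply, MonoidHom.comp_apply, phi_mem J Ψ ⟨i, h⟩, iot_inl, ← h1]
        simp [iot, tt]; rfl
      · rw [MonoidHom.comp_apply, MonoidHom.comp_apply, phi_notMem J Ψ i h]
        simp [iot]
    · rw [MonoidHom.comp_apply, MonoidHom.comp_apply, phi_inr]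
      simp only [iot, FreeGroup.lift_apply_of, Sum.elim_inr, MulEquiv.toMonoidHom_eq_coe,
        MonoidHom.coe_coe, MulAut.conj_apply]
      rw [pow_succ' _ (k + 1)]
      group
  exact DFunLike.congr_fun this g

theorem iot_inj (hΨ : Injective Ψ) : Injective (iot J Ψ) := by
  let E : (⊤ : Subgroup (FreeGroup (Kap J))) ≃* (phi J Ψ).range :=
    Subgroup.topEquiv.trans (MonoidHom.ofInjective (phi_inj J Ψ hΨ))
  let Q := HNNExtension (FreeGroup (Kap J)) ⊤ (phi J Ψ).range E
  have hE : ∀ g, (HNNExtension.t : Q) * HNNExtension.of g * (HNNExtension.t : Q)⁻¹ =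
      HNNExtension.of (phi J Ψ g) := by
    intro g
    have := HNNExtension.equiv_eq_conj (φ := E) ⟨g, Subgroup.mem_top g⟩
    exact this.symm
  let f : Option I → Q := fun o => o.elim HNNExtension.t
    (fun i => HNNExtension.of (FreeGroup.of (Sum.inl i)))
  have hf : ∀ u, FreeGroup.lift f (FreeGroup.map some u) =
      HNNExtension.of (FreeGroup.map Sum.inl u) := by
    intro u
    have : (FreeGroup.lift f).comp (FreeGroup.map some) =
        (HNNExtension.of : _ →* Q).comp (FreeGroup.map Sum.inl) := by
      ext x; simp [f]
    exact DFunLike.congr_fun this u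
  have hrel : ∀ r ∈ mtRelsRel J Ψ, FreeGroup.lift f r = 1 := by
    rintro _ ⟨j, rfl⟩
    have h2 := hE (FreeGroup.of (Sum.inl j.1))
    rw [phi_mem] at h2
    simp only [map_mul, map_inv, hf]
    rw [mul_inv_eq_one]
    refine Eq.trans ?_ h2
    simp [f]
  let h : MTRel J Ψ →* Q := PresentedGroup.toGroup hrel
  have hht : h (tt J Ψ) = HNNExtension.t := PresentedGroup.toGroup.of hrel
  have hhe : ∀ i, h (PresentedGroup.of (some i)) = HNNExtension.of (FreeGroup.of (Sum.inl i)) :=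
    fun i => PresentedGroup.toGroup.of hrel
  have hcomp : h.comp (iot J Ψ) = HNNExtension.of := by
    ext x
    rcases x with i | ⟨k, i⟩
    · simp [iot, hhe]
    · simp only [iot, MonoidHom.comp_apply, FreeGroup.lift_apply_of, Sum.elim_inr, map_mul,
        map_pow, map_inv, hht, hhe]
      rw [conj_iterate (HNNExtension.of : _ →* Q) _ (phi J Ψ) hE (k + 1)]
      congr 1
      induction k with
      | zero => simpa using phi_notMem J Ψ i.1 i.2
      | succ k ih => rw [iterate_succ_apply', ih, phi_inr]
  have h2 : Injective (h.comp (iot J Ψ)) := by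
    rw [hcomp]; exact HNNExtension.of_injective _
  exact Injective.of_comp h2

theorem eps_exists : ∃ ε : MTRel J Ψ →* Multiplicative ℤ, ε (tt J Ψ) = Multiplicative.ofAdd 1 ∧
    ∀ g, ε (iot J Ψ g) = 1 := by
  let f : Option I → Multiplicative ℤ := fun o => o.elim (Multiplicative.ofAdd 1) (fun _ => 1)
  have hf : ∀ u, FreeGroup.lift f (FreeGroup.map some u) = 1 := by
    intro u
    have : (FreeGroup.lift f).comp (FreeGroup.map some) = 1 := by
      ext x; simp [f]
    exact DFunLike.congr_fun this u
  have hrel : ∀ r ∈ mtRelsRel J Ψ, FreeGroup.lift f r = 1 := by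
    rintro _ ⟨j, rfl⟩
    simp only [map_mul, map_inv, hf]
    simp [f]
  let ε : MTRel J Ψ →* Multiplicative ℤ := PresentedGroup.toGroup hrel
  have h1 : ∀ i, ε (PresentedGroup.of (some i)) = 1 := fun i => PresentedGroup.toGroup.of hrel
  refine ⟨ε, PresentedGroup.toGroup.of hrel, ?_⟩
  have : ε.comp (iot J Ψ) = 1 := by
    ext1 x
    rcases x with i | ⟨k, i⟩ <;> simp [iot, h1]
  exact fun g => DFunLike.congr_fun this g

theorem iot_normal_form (p : MTRel J Ψ) : ∃ a b : ℕ, ∃ n ∈ (iot J Ψ).range,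
    p = ((tt J Ψ) ^ a)⁻¹ * n * (tt J Ψ) ^ b := by
  refine normal_form (tt J Ψ) (iot J Ψ).range ?_ p ?_
  · rintro _ ⟨g, rfl⟩
    exact ⟨_, (iot_conj J Ψ g).symm⟩
  · have : (⊤ : Subgroup (MTRel J Ψ)) ≤ gen (iot J Ψ).range [tt J Ψ] := by
      rw [← PresentedGroup.closure_range_of, Subgroup.closure_le]
      rintro _ ⟨o, rfl⟩
      rcases o with _ | x
      · exact mem_gen _ (List.mem_cons_self)
      · exact le_gen _ _ ⟨FreeGroup.of (Sum.inl x), by simp [iot]⟩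
    exact this (Subgroup.mem_top p)

theorem move (ε : MTRel J Ψ →* Multiplicative ℤ) (hεt : ε (tt J Ψ) = Multiplicative.ofAdd 1)
    (hε : ∀ g, ε (iot J Ψ g) = 1) (T : Finset (MTRel J Ψ)) (hT : ∀ p ∈ T, ε p = 1) :
    ∃ a : ℕ, ∀ p ∈ T, (tt J Ψ) ^ a * p * ((tt J Ψ) ^ a)⁻¹ ∈ (iot J Ψ).range := by
  classical
  have hup : ∀ k : ℕ, ∀ n ∈ (iot J Ψ).range,
      (tt J Ψ) ^ k * n * ((tt J Ψ) ^ k)⁻¹ ∈ (iot J Ψ).range := fun k =>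
    conj_pow_mem (tt J Ψ) (iot J Ψ).range (by
      rintro _ ⟨g, rfl⟩
      exact ⟨_, (iot_conj J Ψ g).symm⟩) k
  have hshift : ∀ a c : ℕ, a ≤ c → ∀ p, (tt J Ψ) ^ a * p * ((tt J Ψ) ^ a)⁻¹ ∈ (iot J Ψ).range →
      (tt J Ψ) ^ c * p * ((tt J Ψ) ^ c)⁻¹ ∈ (iot J Ψ).range := by
    intro a c hac p hp
    obtain ⟨k, rfl⟩ := Nat.exists_eq_add_of_le' hac
    have := hup k _ hp
    rw [pow_add]
    convert this using 1
    group
  induction T using Finset.induction_on with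
  | empty => exact ⟨0, by simp⟩
  | insert p T _ ih =>
    obtain ⟨a, ha⟩ := ih fun q hq => hT q (Finset.mem_insert_of_mem hq)
    obtain ⟨c, c', n, hn, hp⟩ := iot_normal_form J Ψ p
    have hcc : c = c' := by
      have h1 := hT p (Finset.mem_insert_self _ _)
      obtain ⟨g, rfl⟩ := hn
      rw [hp, map_mul, map_mul, map_inv, map_pow, map_pow, hε, hεt, mul_one, inv_mul_eq_one] at h1
      have h2 := congrArg Multiplicative.toAdd h1
      simpa using h2
    subst hcc
    refine ⟨max a c, ?_⟩
    intro q hq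
    rcases Finset.mem_insert.1 hq with rfl | hq
    · refine hshift c _ (le_max_right _ _) _ ?_
      rw [hp]
      convert hn using 1
      group
    · exact hshift a _ (le_max_left _ _) _ (ha q hq)

end

theorem exists_preimage {κ M : Type} [Group M] (i : FreeGroup κ →* M) (T : Finset M)
    (hT : ∀ p ∈ T, p ∈ i.range) : ∃ A : Subgroup (FreeGroup κ), A.FG ∧
      A.map i = Subgroup.closure (T : Set M) := by
  classical
  obtain ⟨T', hT'⟩ : ∃ T' : Finset (FreeGroup κ), T'.image i = T := by
    have : (T : Set M) ⊆ Set.range i := fun p hp => hT p hp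
    obtain ⟨T', h1⟩ := Finset.subset_set_image_iff.1 (by rwa [Set.image_univ] :
      (T : Set M) ⊆ i '' Set.univ)
    exact ⟨T', h1.2⟩
  refine ⟨Subgroup.closure T', ⟨T', rfl⟩, ?_⟩
  rw [MonoidHom.map_closure, ← hT']
  simp

end PrefPres

open PrefPres

/-- Every nontrivial finitely generated subgroup `H` of `M(Ψ)` admits a preferred
presentation `⟨s, x₁, …, x_m, y₁, …, y_r | s x_j s⁻¹ w_j⁻¹ (1 ≤ j ≤ m)⟩` in which
`x_j ↦ w_j` defines an injective homomorphism from the free group on the `x_j` to the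
free group on the `x_j` and `y_k`. -/
theorem subgroup_has_preferred_presentation {I : Type} (J : Set I)
    (Ψ : freeFactor J →* FreeGroup I) (hΨ : Function.Injective Ψ)
    (H : Subgroup (MTRel J Ψ)) (hH : H.FG) (hne : H ≠ ⊥) :
    ∃ (m r : ℕ) (w : Fin m → FreeGroup (Fin m ⊕ Fin r)),
      Function.Injective (FreeGroup.lift (fun j : Fin m => w j)) ∧
      Nonempty (PresentedGroup (prefRels m r w) ≃* H) := by
  classical
  obtain ⟨ε, hεt, hε⟩ := eps_exists J Ψ
  obtain ⟨T, hT⟩ := hH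
  have hTH : ∀ h ∈ T, h ∈ H := fun h hh => hT.le (Subgroup.subset_closure hh)
  have hi := iot_inj J Ψ hΨ
  by_cases htriv : ∀ h ∈ H, ε h = 1
  · obtain ⟨a, ha⟩ := move J Ψ ε hεt hε T (fun p hp => htriv p (hTH p hp))
    set c := MulAut.conj ((tt J Ψ) ^ a) with hc
    obtain ⟨A, hA, hAi⟩ := exists_preimage (iot J Ψ) (T.image c) (by
      intro p hp
      obtain ⟨q, hq, rfl⟩ := Finset.mem_image.1 hp
      exact ha q hq)
    have hmap : H.map c.toMonoidHom = A.map (iot J Ψ) := by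
      rw [hAi, ← hT, MonoidHom.map_closure]
      simp
    have e : H ≃* A := ((H.equivMapOfInjective c.toMonoidHom c.injective).trans
      (MulEquiv.subgroupCongr hmap)).trans (A.equivMapOfInjective _ hi).symm
    refine free_case A hA ?_ e
    rintro rfl
    apply hne
    rw [Subgroup.map_bot] at hmap
    exact (Subgroup.map_eq_bot_iff_of_injective H c.injective).1 hmap
  · push Not at htriv
    obtain ⟨x, hx, hx1⟩ := htriv
    -- choose an element of minimal positive exponent
    obtain ⟨y, hy, hgen⟩ : ∃ y ∈ H, ∀ h ∈ H, ∃ n : ℤ, ε h = ε y ^ n := by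
      obtain ⟨⟨_, y, hy, rfl⟩, hg⟩ := IsCyclic.exists_generator (α := H.map ε)
      refine ⟨y, hy, fun h hh => ?_⟩
      obtain ⟨n, hn⟩ := hg ⟨ε h, h, hh, rfl⟩
      exact ⟨n, (congrArg Subtype.val hn).symm⟩
    have hy1 : ε y ≠ 1 := by
      intro h
      obtain ⟨n, hn⟩ := hgen x hx
      rw [h, one_zpow] at hn
      exact hx1 hn
    obtain ⟨z, q, hz, hzgen, hzq, hz1⟩ : ∃ (z : MTRel J Ψ) (q : ℕ), z ∈ H ∧
        (∀ h ∈ H, ∃ n : ℤ, ε h = ε z ^ n) ∧ ε z = ε (tt J Ψ ^ q) ∧ ε z ≠ 1 := by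
      have hpw : ∀ k : ℕ, ε (tt J Ψ ^ k) = Multiplicative.ofAdd (k : ℤ) := by
        intro k
        rw [map_pow, hεt]
        apply Multiplicative.toAdd.injective
        simp
      rcases Int.natAbs_eq (ε y).toAdd with h | h
      · refine ⟨y, (ε y).toAdd.natAbs, hy, hgen, ?_, hy1⟩
        rw [hpw, ← h]; rfl
      · refine ⟨y⁻¹, (ε y).toAdd.natAbs, H.inv_mem hy, ?_, ?_, by simpa using hy1⟩
        · intro g hg
          obtain ⟨n, hn⟩ := hgen g hg
          exact ⟨-n, by rw [hn]; simp⟩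
        · rw [hpw, map_inv]
          apply Multiplicative.toAdd.injective
          rw [toAdd_inv, toAdd_ofAdd]
          omega
    have hex : ∀ h : MTRel J Ψ, ∃ n : ℤ, h ∈ H → ε h = ε z ^ n := by
      intro h
      by_cases hh : h ∈ H
      · obtain ⟨n, hn⟩ := hzgen h hh
        exact ⟨n, fun _ => hn⟩
      · exact ⟨0, fun h' => (hh h').elim⟩
    choose N hN using hex
    let T1 : Finset (MTRel J Ψ) := T.image fun h => h * z ^ (-N h)
    have hT1 : ∀ p ∈ T1, ε p = 1 := by
      intro p hp
      obtain ⟨h, hh, rfl⟩ := Finset.mem_image.1 hp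
      rw [map_mul, map_zpow, hN h (hTH h hh), ← zpow_add, add_neg_cancel, zpow_zero]
    obtain ⟨a, ha⟩ := move J Ψ ε hεt hε (insert (z * (tt J Ψ ^ q)⁻¹) T1) (by
      intro p hp
      rcases Finset.mem_insert.1 hp with rfl | hp
      · rw [map_mul, map_inv, hzq, mul_inv_cancel]
      · exact hT1 p hp)
    set c := MulAut.conj ((tt J Ψ) ^ a) with hc
    obtain ⟨A, hA, hAi⟩ := exists_preimage (iot J Ψ) (T1.image c) (by
      intro p hp
      obtain ⟨q, hq, rfl⟩ := Finset.mem_image.1 hp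
      exact ha q (Finset.mem_insert_of_mem hq))
    obtain ⟨l, hl⟩ := ha _ (Finset.mem_insert_self _ _)
    have hcz : c z = iot J Ψ l * tt J Ψ ^ q := by
      rw [hl, hc, MulAut.conj_apply]
      have : Commute (tt J Ψ ^ a) (tt J Ψ ^ q) := Commute.pow_pow_self _ _ _
      have h2 : ((tt J Ψ ^ q)⁻¹ * (tt J Ψ ^ a)⁻¹) * tt J Ψ ^ q = (tt J Ψ ^ a)⁻¹ := by
        rw [← mul_inv_rev, this.eq]; group
      simp only [mul_assoc] at h2 ⊢
      rw [h2]
    have hmap : H.map c.toMonoidHom = gen (A.map (iot J Ψ)) [c z] := by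
      have hHg : H = gen (Subgroup.closure (T1 : Set (MTRel J Ψ))) [z] := by
        apply le_antisymm
        · conv_lhs => rw [← hT]
          rw [Subgroup.closure_le]
          intro h hh
          have h1 : h * z ^ (-N h) ∈ gen (Subgroup.closure (T1 : Set (MTRel J Ψ))) [z] :=
            le_gen _ _ (Subgroup.subset_closure (Finset.mem_coe.2
              (Finset.mem_image_of_mem (fun h => h * z ^ (-N h)) hh)))
          have h2 : z ∈ gen (Subgroup.closure (T1 : Set (MTRel J Ψ))) [z] :=
            mem_gen _ List.mem_cons_self
          exact (Subgroup.mul_mem_cancel_right _ (Subgroup.zpow_mem _ h2 _)).1 h1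
        · rw [gen_le, Subgroup.closure_le]
          refine ⟨?_, by simpa using hz⟩
          intro p hp
          obtain ⟨h, hh, rfl⟩ := Finset.mem_image.1 (Finset.mem_coe.1 hp)
          exact H.mul_mem (hTH h hh) (H.zpow_mem hz _)
      conv_lhs => rw [hHg]
      rw [gen_map, hAi, MonoidHom.map_closure]
      simp
    obtain ⟨m, r, w, hw, ⟨E⟩⟩ := asc (iot J Ψ) hi (c z) (by
      intro g
      refine ⟨l * (phi J Ψ)^[q] g * l⁻¹, ?_⟩
      rw [map_mul, map_mul, map_inv, ← conj_iterate (iot J Ψ) (tt J Ψ) (phi J Ψ) (iot_conj J Ψ),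
        hcz]
      group) ε hε (by
      rw [hc, MulAut.conj_apply, map_mul, map_mul, map_inv, mul_right_comm, mul_inv_cancel,
        one_mul]
      exact hz1) A hA
    refine ⟨m, r, w, hw, ⟨E.trans ?_⟩⟩
    exact ((H.equivMapOfInjective c.toMonoidHom c.injective).trans
      (MulEquiv.subgroupCongr hmap)).symm
end

section
/- If H is a finitely generated subgroup of M(Φ) that contains t, then there is a finite subset A of 𝔽 such that H is generated by {t} ∪ ι(A). -/
/-- The relators `t eᵢ t⁻¹ Φ(eᵢ)⁻¹` of the mapping torus of an endomorphism `Φ` of the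
free group on `I`; the generator `none` plays the role of the stable letter `t`. -/
def mtRels {I : Type} (Φ : FreeGroup I →* FreeGroup I) : Set (FreeGroup (Option I)) :=
  Set.range fun i : I =>
    FreeGroup.of (none : Option I) * FreeGroup.of (some i) * (FreeGroup.of (none : Option I))⁻¹ *
      (FreeGroup.map some (Φ (FreeGroup.of i)))⁻¹

/-- The mapping torus `M(Φ) = ⟨t, eᵢ (i ∈ I) | t eᵢ t⁻¹ Φ(eᵢ)⁻¹ (i ∈ I)⟩`. -/
abbrev MT {I : Type} (Φ : FreeGroup I →* FreeGroup I) : Type := PresentedGroup (mtRels Φ)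

/-- The stable letter `t` of the mapping torus. -/
def mtT {I : Type} (Φ : FreeGroup I →* FreeGroup I) : MT Φ := PresentedGroup.of none

/-- The natural homomorphism `ι : 𝔽 → M(Φ)`. -/
def mtι {I : Type} (Φ : FreeGroup I →* FreeGroup I) : FreeGroup I →* MT Φ :=
  (PresentedGroup.mk (mtRels Φ)).comp (FreeGroup.map some)

theorem mt_conj {I : Type} (Φ : FreeGroup I →* FreeGroup I) (x : FreeGroup I) :
    mtT Φ * mtι Φ x = mtι Φ (Φ x) * mtT Φ := by
  have h : (MulAut.conj (mtT Φ)).toMonoidHom.comp (mtι Φ) = (mtι Φ).comp Φ := by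
    ext i
    have h1 : PresentedGroup.mk (mtRels Φ) (FreeGroup.of (none : Option I) *
        FreeGroup.of (some i) * (FreeGroup.of (none : Option I))⁻¹ *
        (FreeGroup.map some (Φ (FreeGroup.of i)))⁻¹) = 1 :=
      PresentedGroup.one_of_mem ⟨i, rfl⟩
    rw [map_mul, map_inv, mul_inv_eq_one, map_mul, map_mul, map_inv] at h1
    simpa [mtι, mtT, PresentedGroup.of] using h1
  have h2 := DFunLike.congr_fun h x
  simp only [MonoidHom.comp_apply, MulEquiv.toMonoidHom_eq_coe, MonoidHom.coe_coe,
    MulAut.conj_apply] at h2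
  rw [← h2]; group

theorem mt_conj_pow {I : Type} (Φ : FreeGroup I →* FreeGroup I) (a : ℕ) :
    ∀ x : FreeGroup I, ∃ y, mtι Φ x * (mtT Φ ^ a)⁻¹ = (mtT Φ ^ a)⁻¹ * mtι Φ y := by
  induction a with
  | zero => intro x; exact ⟨x, by simp⟩
  | succ n ih =>
    intro x
    obtain ⟨y, hy⟩ := ih (Φ x)
    refine ⟨y, ?_⟩
    have h : mtι Φ x * (mtT Φ)⁻¹ = (mtT Φ)⁻¹ * mtι Φ (Φ x) := by
      rw [mul_inv_eq_iff_eq_mul, mul_assoc, ← mt_conj]; group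
    rw [pow_succ, mul_inv_rev, ← mul_assoc, h, mul_assoc, mul_assoc, hy]
    
theorem mt_left {I : Type} (Φ : FreeGroup I →* FreeGroup I) (w : FreeGroup (Option I)) :
    ∀ h : MT Φ, (∃ (a b : ℕ) (x : FreeGroup I), h = (mtT Φ ^ a)⁻¹ * mtι Φ x * mtT Φ ^ b) →
      ∃ (a b : ℕ) (x : FreeGroup I),
        PresentedGroup.mk (mtRels Φ) w * h = (mtT Φ ^ a)⁻¹ * mtι Φ x * mtT Φ ^ b := by
  have key : ∀ (z : FreeGroup I) (h : MT Φ),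
      (∃ (a b : ℕ) (x : FreeGroup I), h = (mtT Φ ^ a)⁻¹ * mtι Φ x * mtT Φ ^ b) →
      ∃ (a b : ℕ) (x : FreeGroup I), mtι Φ z * h = (mtT Φ ^ a)⁻¹ * mtι Φ x * mtT Φ ^ b := by
    rintro z h ⟨a, b, x, rfl⟩
    obtain ⟨y, hy⟩ := mt_conj_pow Φ a z
    refine ⟨a, b, y * x, ?_⟩
    rw [← mul_assoc, ← mul_assoc, hy, map_mul]; group
  have hsome : ∀ i, PresentedGroup.mk (mtRels Φ) (FreeGroup.of (some i)) =
      mtι Φ (FreeGroup.of i) := by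
    intro i; simp [mtι]
  have hnone : PresentedGroup.mk (mtRels Φ) (FreeGroup.of none) = mtT Φ := rfl
  induction w using FreeGroup.induction_on with
  | C1 => intro h hh; simpa using hh
  | of i =>
    intro h hh
    cases i with
    | some i => rw [hsome]; exact key _ _ hh
    | none =>
      obtain ⟨a, b, x, rfl⟩ := hh
      rw [hnone]
      cases a with
      | zero =>
        refine ⟨0, b + 1, Φ x, ?_⟩
        simp only [pow_zero, inv_one, one_mul]
        rw [← mul_assoc, mt_conj, pow_succ', mul_assoc]
      | succ n =>
        refine ⟨n, b, x, ?_⟩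
        rw [pow_succ]; group
  | inv_of i _ =>
    intro h hh
    cases i with
    | some i => rw [map_inv, hsome, ← map_inv]; exact key _ _ hh
    | none =>
      obtain ⟨a, b, x, rfl⟩ := hh
      rw [map_inv, hnone]
      refine ⟨a + 1, b, x, ?_⟩
      rw [pow_succ]; group
  | mul u v hu hv =>
    intro h hh
    rw [map_mul, mul_assoc]
    exact hu _ (hv _ hh)

theorem mt_form {I : Type} (Φ : FreeGroup I →* FreeGroup I) (g : MT Φ) :
    ∃ (x : FreeGroup I) (a b : ℕ), g = (mtT Φ ^ a)⁻¹ * mtι Φ x * mtT Φ ^ b := by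
  obtain ⟨w, rfl⟩ := PresentedGroup.mk_surjective (mtRels Φ) g
  obtain ⟨a, b, x, h⟩ := mt_left Φ w 1 ⟨0, 0, 1, by simp⟩
  exact ⟨x, a, b, by rw [← h, mul_one]⟩

/-- If a finitely generated subgroup `H` of `M(Φ)` contains `t`, then there is a finite set
`A ⊆ 𝔽` such that `H = ⟨t, A⟩`. -/
theorem fg_subgroup_containing_t_generated {I : Type} (Φ : FreeGroup I →* FreeGroup I)
    (hΦ : Function.Injective Φ) (H : Subgroup (MT Φ)) (hH : H.FG) (ht : mtT Φ ∈ H) :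
    ∃ A : Finset (FreeGroup I),
      H = Subgroup.closure ({mtT Φ} ∪ mtι Φ '' (A : Set (FreeGroup I))) := by
  classical
  obtain ⟨S, rfl⟩ := hH
  choose f a b hf using mt_form Φ
  refine ⟨S.image f, le_antisymm ?_ ?_⟩
  · rw [Subgroup.closure_le]
    intro g hg
    have h1 : mtT Φ ∈ Subgroup.closure
        ({mtT Φ} ∪ mtι Φ '' ((S.image f : Finset (FreeGroup I)) : Set (FreeGroup I))) :=
      Subgroup.subset_closure (Or.inl rfl)
    have h2 : mtι Φ (f g) ∈ Subgroup.closure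
        ({mtT Φ} ∪ mtι Φ '' ((S.image f : Finset (FreeGroup I)) : Set (FreeGroup I))) :=
      Subgroup.subset_closure
        (Or.inr ⟨f g, Finset.mem_coe.2 (Finset.mem_image_of_mem f hg), rfl⟩)
    rw [SetLike.mem_coe, hf g]
    exact mul_mem (mul_mem (inv_mem (pow_mem h1 _)) h2) (pow_mem h1 _)
  · rw [Subgroup.closure_le]
    rintro _ (rfl | ⟨x, hx, rfl⟩)
    · exact ht
    · obtain ⟨g, hg, rfl⟩ := Finset.mem_image.1 (Finset.mem_coe.1 hx)
      have h : mtι Φ (f g) = mtT Φ ^ a g * g * (mtT Φ ^ b g)⁻¹ := by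
        conv_rhs => rw [hf g]
        rw [← hf g]
        have := hf g
        rw [mul_assoc, eq_inv_mul_iff_mul_eq] at this
        rw [this, mul_inv_cancel_right]
      rw [SetLike.mem_coe, h]
      exact mul_mem (mul_mem (pow_mem ht _) (Subgroup.subset_closure hg))
        (inv_mem (pow_mem ht _))
end
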